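/- arXiv:1711.03049 — 4 statements merged into one kernel-verified Lean document; each statement's English description precedes it below -/
import Mathlib

section
/- Fix d ≥ 1. Let J ⊆ ℝ be an open interval, a, b : J → ℝ differentiable with a(s) < b(s) for all s, and q : J × ℝ → ℝ^d ∖ {0} a C² map such that for each s ∈ J the curve t ↦ q(s, t) solves Newton's system ∂²q/∂t² = −q/‖q‖³. Define the endpoints A(s) = q(s, a(s)), B(s) = q(s, b(s)), the energy H(s) = ½‖∂_t q(s, t)‖² − 1/‖q(s, t)‖ (independent of t), and the Maupertuis action w(s) = ∫_{a(s)}^{b(s)} ‖∂_t q(s, t)‖² dt. If the three functions s ↦ ‖B(s) − A(s)‖, s ↦ ‖A(s)‖ + ‖B(s)‖, and s ↦ H(s) are constant on J, then s ↦ w(s) is constant on J. -/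
/-!
Write `A, B` for the endpoints, `vA, vB` for the velocities there and a prime for `d/ds`. At fixed
energy, the first variation of the Maupertuis action (`hasDerivAt_action`) has only boundary terms:
`w' = ⟪vB, B'⟫ - ⟪vA, A'⟫`. So it suffices that the right-hand side vanishes.

Angular momentum and the eccentricity vector take the same values at both ends of the arc. In an
orthonormal frame of the orbital plane this gives, with `uA = A/‖A‖` and `uB = B/‖B‖`,
`vA = λ (B - A) + κ uA` and `vB = λ (B - A) - κ uB` for some scalars `λ, κ`, provided that `A ≠ B`
and `uA + uB ≠ 0`. Then
`⟪vB, B'⟫ - ⟪vA, A'⟫ = λ ⟪B - A, B' - A'⟫ - κ (⟪uA, A'⟫ + ⟪uB, B'⟫)`,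
and the two terms are multiples of the derivatives of `‖B - A‖²` and of `‖A‖ + ‖B‖`.

In the two exceptional cases the degeneracy persists along the whole family, since it is expressed
by the constants of the problem: `A = B` means `‖B - A‖ = 0`, whence `A' = B'` and `vA = vB`;
`uA + uB = 0` means `‖B - A‖ = ‖A‖ + ‖B‖`, and differentiating `‖A‖ B + ‖B‖ A = 0` supplies the
missing relation between `A'` and `B'`. These computations are in `planar_identity` and
`endpoint_identity`.

The frame exists because the angular momentum is nonzero: on a rectilinear orbit `r = ‖q‖` would
satisfy `r'' = -1/r²` for all times, but a positive concave function on the line is constant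
(`kepler_areal_pos`).
-/

open scoped RealInnerProductSpace
open intervalIntegral MeasureTheory Filter Topology

/-! ### The endpoint identity -/

/-- The equality `⟪vB, B'⟫ = ⟪vA, A'⟫` in coordinates of the orbital plane, the first axis pointing
to `A`: `A = (r, 0)`, `B = (b₁, b₂)` with `‖B‖ = R`, velocities `(α, β)` and `(w₁, w₂)`,
variations `A' = (x₁, x₂)` and `B' = (y₁, y₂)`. The hypotheses `hL`, `h₁`, `h₂` equate the angular
momentum `k` and the eccentricity vector at both ends. -/
theorem planar_identity {r R k α β b₁ b₂ w₁ w₂ x₁ x₂ y₁ y₂ : ℝ} (hr : 0 < r) (hR : 0 < R)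
    (hk : 0 < k) (hk' : r * β = k) (hRb : b₁ ^ 2 + b₂ ^ 2 = R ^ 2)
    (hL : b₁ * w₂ - b₂ * w₁ = k)
    (h₁ : k * w₂ - b₁ / R = k * β - 1) (h₂ : k * w₁ + b₂ / R = k * α)
    (hsum : x₁ + (b₁ * y₁ + b₂ * y₂) / R = 0)
    (hchord : (b₁ - r) * (y₁ - x₁) + b₂ * (y₂ - x₂) = 0)
    (heq : b₁ = r → b₂ = 0 → y₁ = x₁ ∧ y₂ = x₂)
    (hopp : b₁ = -R → b₂ = 0 → r * y₂ + R * x₂ = 0) :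
    w₁ * y₁ + w₂ * y₂ = α * x₁ + β * x₂ := by
  obtain ⟨c, hc⟩ : ∃ c, c = b₁ / R := ⟨_, rfl⟩
  obtain ⟨s, hs⟩ : ∃ s, s = b₂ / R := ⟨_, rfl⟩
  have hb₁ : b₁ = R * c := by rw [hc]; field_simp
  have hb₂ : b₂ = R * s := by rw [hs]; field_simp
  rw [← hc] at h₁
  rw [← hs] at h₂
  have hcs : c ^ 2 + s ^ 2 = 1 := by
    have : R ^ 2 * (c ^ 2 + s ^ 2) = R ^ 2 * 1 := by rw [hb₁, hb₂] at hRb; linarith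
    exact mul_left_cancel₀ (by positivity) this
  have hsum' : x₁ + (c * y₁ + s * y₂) = 0 := by
    rw [← hsum, hb₁, hb₂]; field_simp
  have hL' : k * k = b₁ * (k * β - 1 + c) - b₂ * (k * α - s) := by
    linear_combination (-k) * hL + b₁ * h₁ - b₂ * h₂
  apply mul_left_cancel₀ (ne_of_gt hk)
  -- `1 + c = 0` is the case of opposite endpoint directions
  by_cases hc1 : 1 + c = 0
  · have hc' : c = -1 := by linarith
    have hs' : s = 0 := by
      have : s ^ 2 = 0 := by rw [hc'] at hcs; linarith
      exact pow_eq_zero_iff (two_ne_zero) |>.1 this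
    subst hc' hs'
    have hb₁' : b₁ = -R := by linarith
    have hb₂' : b₂ = 0 := by linarith
    have ho := hopp hb₁' hb₂'
    have hxy : y₁ = x₁ := by linarith
    rw [hb₁', hb₂'] at hL'
    have : r * (k * (w₁ * y₁ + w₂ * y₂)) = r * (k * (α * x₁ + β * x₂)) := by
      subst hxy
      have e1 : R * x₂ = - (r * y₂) := by linarith
      have e2 : R * (k * β - 2) = - (k * (r * β)) := by rw [hk']; linarith
      apply mul_left_cancel₀ hR.ne'
      linear_combination (r * R * y₁) * h₂ + (r * R * y₂) * h₁ + (r * y₂) * e2 - (r * k * β) * e1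
    exact mul_left_cancel₀ hr.ne' this
  · by_cases hC : (b₁ - r) ^ 2 + b₂ ^ 2 = 0
    · have e1 : b₁ = r := by nlinarith [sq_nonneg (b₁ - r), sq_nonneg b₂]
      have e2 : b₂ = 0 := by nlinarith [sq_nonneg (b₁ - r), sq_nonneg b₂]
      obtain ⟨rfl, rfl⟩ := heq e1 e2
      have hs0 : s = 0 := by rw [hs, e2]; simp
      have hc1' : c = 1 := by
        subst hs0
        have : (c - 1) * (1 + c) = 0 := by linarith
        rcases mul_eq_zero.1 this with h | h
        · linarith
        · exact absurd h hc1
      subst hs0 hc1'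
      linear_combination y₁ * h₂ + y₂ * h₁
    -- generic case: subtracting `κ` times the direction of `A` from `k` times the velocity at `A`
    -- leaves a vector parallel to the chord (`hcross`), hence orthogonal to `B' - A'` (`hm`)
    · obtain ⟨κ, hκ⟩ : ∃ κ, κ = s / (1 + c) := ⟨_, rfl⟩
      have hκ' : κ * (1 + c) = s := by rw [hκ]; field_simp
      have hκs : κ * s = 1 - c := by
        apply mul_right_cancel₀ hc1
        linear_combination s * hκ' + hcs
      have hcross : (k * α - κ) * b₂ = k * β * (b₁ - r) := by
        rw [← hk'] at hL' ⊢
        rw [hb₁, hb₂] at *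
        linear_combination -R * hκs + hL' + R * hcs
      have hm : (k * α - κ) * (y₁ - x₁) + k * β * (y₂ - x₂) = 0 := by
        apply mul_left_cancel₀ hC
        linear_combination ((k * α - κ) * (b₁ - r) + k * β * b₂) * hchord
          + ((b₁ - r) * (y₂ - x₂) - b₂ * (y₁ - x₁)) * (-hcross)
      linear_combination y₁ * h₂ + y₂ * h₁ + hm - κ * hsum' + y₁ * hκ' + y₂ * hκs

/-- `endpoint_identity` for `A = r • f` with velocity `α • f + β • g`, in a given orthonormal frame
`f, g` of the orbital plane. -/
theorem endpoint_identity_of_frame {E : Type*} [NormedAddCommGroup E] [InnerProductSpace ℝ E]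
    {f g B w X Y : E} {r α β : ℝ} (hff : ⟪f, f⟫ = 1) (hfg : ⟪f, g⟫ = 0) (hgg : ⟪g, g⟫ = 1)
    (hr : 0 < r) (hβ : 0 < β) (hB : B ≠ 0)
    (hpB : 0 < ‖B‖ ^ 2 * ‖w‖ ^ 2 - ⟪B, w⟫ ^ 2)
    (hL : ∀ x : E, (r * β) • (⟪f, x⟫ • g - ⟪g, x⟫ • f) = ⟪B, x⟫ • w - ⟪w, x⟫ • B)
    (he : (α ^ 2 + β ^ 2 - 1 / r) • r • f - (r * α) • (α • f + β • g)
      = (‖w‖ ^ 2 - 1 / ‖B‖) • B - ⟪B, w⟫ • w)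
    (hsum : ⟪f, X⟫ + ⟪B, Y⟫ / ‖B‖ = 0)
    (hchord : ⟪B - r • f, Y - X⟫ = 0)
    (heq : r • f = B → X = Y)
    (hopp : ‖B - r • f‖ = r + ‖B‖ → ∃ μ : ℝ, r • Y + ‖B‖ • X = μ • (B - r • f)) :
    ⟪w, Y⟫ = ⟪α • f + β • g, X⟫ := by
  obtain ⟨R, hR⟩ : ∃ R, R = ‖B‖ := ⟨_, rfl⟩
  have hR0 : 0 < R := by rw [hR]; positivity
  have hBB : ⟪B, B⟫ = R ^ 2 := by rw [hR, real_inner_self_eq_norm_sq]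
  have hww : ⟪w, w⟫ = ‖w‖ ^ 2 := real_inner_self_eq_norm_sq w
  have hgf : ⟪g, f⟫ = 0 := by rw [real_inner_comm]; exact hfg
  have hip : ∀ x y u z : ℝ, ⟪x • f + y • g, u • f + z • g⟫ = x * u + y * z := by
    intro x y u z
    simp only [inner_add_left, inner_add_right, inner_smul_left, inner_smul_right,
      RCLike.conj_to_real, hff, hfg, hgf, hgg]
    ring
  have hipf : ∀ x y : ℝ, ⟪x • f + y • g, f⟫ = x := by
    intro x y
    simpa using hip x y 1 0
  have hipg : ∀ x y : ℝ, ⟪x • f + y • g, g⟫ = y := by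
    intro x y
    simpa using hip x y 0 1
  have hspanB : ∃ b₁ b₂ : ℝ, B = b₁ • f + b₂ • g := by
    obtain ⟨p, hp⟩ : ∃ p, p = ‖B‖ ^ 2 * ‖w‖ ^ 2 - ⟪B, w⟫ ^ 2 := ⟨_, rfl⟩
    rw [← hp] at hpB
    -- `-p • B` is the square of the angular momentum operator applied to `B`
    have h : p • B
        = ⟪B, w⟫ • (⟪B, B⟫ • w - ⟪w, B⟫ • B) - ⟪B, B⟫ • (⟪B, w⟫ • w - ⟪w, w⟫ • B) := by
      rw [hww, hBB, hp, ← hR, real_inner_comm B w]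
      module
    rw [← hL B, ← hL w] at h
    refine ⟨p⁻¹ * (⟪B, B⟫ * (r * β) * ⟪g, w⟫ - ⟪B, w⟫ * (r * β) * ⟪g, B⟫),
      p⁻¹ * (⟪B, w⟫ * (r * β) * ⟪f, B⟫ - ⟪B, B⟫ * (r * β) * ⟪f, w⟫), ?_⟩
    have h3 : B = p⁻¹ • (p • B) := by
      rw [smul_smul, inv_mul_cancel₀ hpB.ne', one_smul]
    rw [h] at h3
    refine h3.trans ?_
    module
  obtain ⟨b₁, b₂, hBf⟩ := hspanB
  have hspanw : ∃ w₁ w₂ : ℝ, w = w₁ • f + w₂ • g := by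
    have h3 : w = (R ^ 2)⁻¹ • ((⟪B, B⟫ • w - ⟪w, B⟫ • B) + ⟪w, B⟫ • B) := by
      rw [hBB, sub_add_cancel, smul_smul, inv_mul_cancel₀ (by positivity), one_smul]
    rw [← hL B] at h3
    refine ⟨(R ^ 2)⁻¹ * (⟪w, B⟫ * b₁ - r * β * ⟪g, B⟫),
      (R ^ 2)⁻¹ * (⟪w, B⟫ * b₂ + r * β * ⟪f, B⟫), h3.trans ?_⟩
    obtain ⟨c, hc⟩ : ∃ c, c = ⟪w, B⟫ := ⟨_, rfl⟩
    obtain ⟨c₁, hc₁⟩ : ∃ c, c = ⟪g, B⟫ := ⟨_, rfl⟩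
    obtain ⟨c₂, hc₂⟩ : ∃ c, c = ⟪f, B⟫ := ⟨_, rfl⟩
    rw [← hc, ← hc₁, ← hc₂, hBf]
    module
  obtain ⟨w₁, w₂, hwf⟩ := hspanw
  have hBn : b₁ ^ 2 + b₂ ^ 2 = R ^ 2 := by
    rw [← hBB, hBf, hip]; ring
  have hBw : ⟪B, w⟫ = b₁ * w₁ + b₂ * w₂ := by rw [hBf, hwf, hip]
  have hw2 : ‖w‖ ^ 2 = w₁ ^ 2 + w₂ ^ 2 := by
    rw [← hww, hwf, hip]; ring
  rw [hw2, hBw, ← hR] at he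
  have hL' : b₁ * w₂ - b₂ * w₁ = r * β := by
    have h := hL f
    rw [hBf, hwf, hipf, hipf, hff, hgf] at h
    have h' : (0 : ℝ) • f + (r * β) • g = (0 : ℝ) • f + (b₁ * w₂ - b₂ * w₁) • g := by
      refine Eq.trans ?_ (h.trans ?_) <;> module
    have := congrArg (fun x => ⟪x, g⟫) h'
    simp only [hipg] at this
    exact this.symm
  have he' : ((α ^ 2 + β ^ 2 - 1 / r) * r - r * α * α) • f + (- (r * α * β)) • g
      = ((w₁ ^ 2 + w₂ ^ 2 - 1 / R) * b₁ - (b₁ * w₁ + b₂ * w₂) * w₁) • f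
        + ((w₁ ^ 2 + w₂ ^ 2 - 1 / R) * b₂ - (b₁ * w₁ + b₂ * w₂) * w₂) • g := by
    rw [hBf, hwf] at he
    refine Eq.trans ?_ (he.trans ?_) <;> module
  have he₁ := congrArg (fun x => ⟪x, f⟫) he'
  have he₂ := congrArg (fun x => ⟪x, g⟫) he'
  simp only [hipf] at he₁
  simp only [hipg] at he₂
  have h1r : 1 / r * r = 1 := by field_simp
  have key := planar_identity (α := α) (β := β) (k := r * β)
    (x₁ := ⟪f, X⟫) (x₂ := ⟪g, X⟫) (y₁ := ⟪f, Y⟫) (y₂ := ⟪g, Y⟫)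
    hr hR0 (by positivity) rfl hBn hL'
    (by linear_combination -he₁ - h1r - w₂ * hL')
    (by linear_combination he₂ - w₁ * hL')
    (by
      rw [← hR, hBf] at hsum
      simpa only [inner_add_left, inner_smul_left, RCLike.conj_to_real] using hsum)
    (by
      rw [hBf] at hchord
      simp only [inner_add_left, inner_sub_left, inner_sub_right, inner_smul_left,
          RCLike.conj_to_real] at hchord
      linear_combination hchord)
    (by
      intro h1 h2
      have : X = Y := heq (by rw [hBf, h1, h2]; simp)
      rw [this]; simp)
    (by
      intro h1 h2
      have hBA : B - r • f = (-(r + R)) • f := by rw [hBf, h1, h2]; module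
      have hfn : ‖f‖ = 1 := by
        have := real_inner_self_eq_norm_sq f
        rw [hff] at this
        exact (sq_eq_sq₀ (norm_nonneg f) zero_le_one).1 (by rw [← this]; norm_num)
      obtain ⟨μ, hμ⟩ := hopp (by
        rw [hBA, norm_smul, hfn, ← hR, Real.norm_eq_abs, abs_neg, abs_of_pos (by positivity),
          mul_one])
      have := congrArg (fun x => ⟪g, x⟫) hμ
      simpa only [hBA, inner_add_right, inner_smul_right, hgf, ← hR, mul_zero] using this)
  rw [hwf]
  simpa only [inner_add_left, inner_smul_left, RCLike.conj_to_real] using key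

/-- The endpoint identity for a Keplerian arc from `A` (velocity `v`) to `B` (velocity `w`) under
variations `X` of `A` and `Y` of `B`. `hL` equates the angular momentum operators
`x ↦ ⟪q, x⟫ q̇ - ⟪q̇, x⟫ q` at both ends, `he` the eccentricity vectors. The last two hypotheses are
needed only for coinciding, respectively opposite, endpoints. -/
theorem endpoint_identity {E : Type*} [NormedAddCommGroup E] [InnerProductSpace ℝ E]
    {A B v w X Y : E} (hA : A ≠ 0) (hB : B ≠ 0)
    (hpA : 0 < ‖A‖ ^ 2 * ‖v‖ ^ 2 - ⟪A, v⟫ ^ 2) (hpB : 0 < ‖B‖ ^ 2 * ‖w‖ ^ 2 - ⟪B, w⟫ ^ 2)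
    (hL : ∀ x : E, ⟪A, x⟫ • v - ⟪v, x⟫ • A = ⟪B, x⟫ • w - ⟪w, x⟫ • B)
    (he : (‖v‖ ^ 2 - 1 / ‖A‖) • A - ⟪A, v⟫ • v = (‖w‖ ^ 2 - 1 / ‖B‖) • B - ⟪B, w⟫ • w)
    (hsum : ⟪A, X⟫ / ‖A‖ + ⟪B, Y⟫ / ‖B‖ = 0)
    (hchord : ⟪B - A, Y - X⟫ = 0)
    (heq : A = B → X = Y)
    (hopp : ‖B - A‖ = ‖A‖ + ‖B‖ → ∃ μ : ℝ, ‖A‖ • Y + ‖B‖ • X = μ • (B - A)) :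
    ⟪w, Y⟫ = ⟪v, X⟫ := by
  obtain ⟨r, hr⟩ : ∃ r, r = ‖A‖ := ⟨_, rfl⟩
  have hr0 : 0 < r := by rw [hr]; positivity
  have hAA : ⟪A, A⟫ = r ^ 2 := by rw [hr, real_inner_self_eq_norm_sq]
  have hvv : ⟪v, v⟫ = ‖v‖ ^ 2 := real_inner_self_eq_norm_sq v
  obtain ⟨k, hk⟩ : ∃ k, k = √(‖A‖ ^ 2 * ‖v‖ ^ 2 - ⟪A, v⟫ ^ 2) := ⟨_, rfl⟩
  have hk0 : 0 < k := by rw [hk]; exact Real.sqrt_pos.2 hpA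
  have hk2 : k ^ 2 = r ^ 2 * ‖v‖ ^ 2 - ⟪A, v⟫ ^ 2 := by rw [hk, Real.sq_sqrt hpA.le, hr]
  -- an orthonormal frame `f, g` of the orbital plane, with `f` pointing to `A`
  obtain ⟨f, hf⟩ : ∃ f : E, f = r⁻¹ • A := ⟨_, rfl⟩
  obtain ⟨g, hg⟩ : ∃ g : E, g = (r / k) • (v - (⟪A, v⟫ / r ^ 2) • A) := ⟨_, rfl⟩
  have hff : ⟪f, f⟫ = 1 := by
    rw [hf]; simp only [inner_smul_left, inner_smul_right, hAA, RCLike.conj_to_real]; field_simp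
  have hfg : ⟪f, g⟫ = 0 := by
    rw [hf, hg]
    simp only [inner_smul_left, inner_smul_right, inner_sub_right, hAA, RCLike.conj_to_real]
    field_simp; ring
  have hgf : ⟪g, f⟫ = 0 := by rw [real_inner_comm]; exact hfg
  have hgg : ⟪g, g⟫ = 1 := by
    rw [hg]
    simp only [inner_smul_left, inner_smul_right, inner_sub_right, inner_sub_left, hAA, hvv,
      real_inner_comm A v, RCLike.conj_to_real]
    field_simp
    rw [hk2]; ring
  obtain ⟨α, hα⟩ : ∃ α, α = ⟪A, v⟫ / r := ⟨_, rfl⟩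
  obtain ⟨β, hβ⟩ : ∃ β, β = k / r := ⟨_, rfl⟩
  have hrβ : r * β = k := by rw [hβ]; field_simp
  have hAf : A = r • f := by rw [hf, smul_smul, mul_inv_cancel₀ hr0.ne', one_smul]
  have hvf : v = α • f + β • g := by
    rw [hf, hg, hα, hβ]
    match_scalars <;> field_simp
    ring
  have hΩ : ∀ x : E, ⟪A, x⟫ • v - ⟪v, x⟫ • A = k • (⟪f, x⟫ • g - ⟪g, x⟫ • f) := by
    intro x
    rw [hAf, hvf, ← hrβ]
    simp only [inner_smul_left, inner_add_left, RCLike.conj_to_real]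
    module
  rw [← hrβ] at hΩ
  have hAv : ⟪A, v⟫ = r * α := by rw [hα]; field_simp
  have hβ0 : 0 < β := by rw [hβ]; positivity
  have hv2 : ‖v‖ ^ 2 = α ^ 2 + β ^ 2 := by
    rw [hα, hβ]; field_simp; rw [hk2]; ring
  rw [hvf]
  refine endpoint_identity_of_frame hff hfg hgg hr0 hβ0 hB hpB
    (fun x => (hΩ x).symm.trans (hL x)) ?_ ?_ ?_ ?_ ?_
  · rw [← he, hv2, hAv, ← hr, ← hAf, ← hvf]
  · rw [← hsum, ← hr, hf, inner_smul_left, RCLike.conj_to_real, inv_mul_eq_div]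
  · rw [← hAf]; exact hchord
  · rw [← hAf]; exact heq
  · rw [← hAf, hr]; exact hopp

/-! ### First integrals of a Keplerian orbit -/

theorem hasDerivAt_norm {E : Type*} [NormedAddCommGroup E] [InnerProductSpace ℝ E]
    {q : ℝ → E} {q' : E} {t : ℝ} (hq : HasDerivAt q q' t) (h0 : q t ≠ 0) :
    HasDerivAt (fun s => ‖q s‖) (⟪q t, q'⟫ / ‖q t‖) t := by
  have h := (hq.norm_sq).sqrt (by simpa using h0)
  simp only [Real.sqrt_sq (norm_nonneg _)] at h
  convert h using 1
  field_simp

theorem const_of_hasDerivAt_zero {F : Type*} [NormedAddCommGroup F] [NormedSpace ℝ F] {f : ℝ → F}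
    (hf : ∀ t, HasDerivAt f 0 t) (x y : ℝ) : f x = f y :=
  is_const_of_deriv_eq_zero (fun t => (hf t).differentiableAt) (fun t => (hf t).deriv) x y

section Kepler

variable {E : Type*} [NormedAddCommGroup E] [InnerProductSpace ℝ E] {q v : ℝ → E}

/-- Conservation of angular momentum, in the form of the skew operator
`x ↦ ⟪q, x⟫ q̇ - ⟪q̇, x⟫ q`. -/
theorem kepler_momentum_const (hq : ∀ t, HasDerivAt q (v t) t)
    (hv : ∀ t, HasDerivAt v (-((‖q t‖ ^ 3)⁻¹ • q t)) t) (x : E) (t₁ t₂ : ℝ) :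
    ⟪q t₁, x⟫ • v t₁ - ⟪v t₁, x⟫ • q t₁ = ⟪q t₂, x⟫ • v t₂ - ⟪v t₂, x⟫ • q t₂ := by
  refine const_of_hasDerivAt_zero (f := fun t => ⟪q t, x⟫ • v t - ⟪v t, x⟫ • q t) (fun t => ?_) _ _
  have h := (((hq t).inner ℝ (hasDerivAt_const t x)).smul (hv t)).sub
    (((hv t).inner ℝ (hasDerivAt_const t x)).smul (hq t))
  refine h.congr_deriv ?_
  simp only [inner_zero_right, inner_neg_left, inner_smul_left, RCLike.conj_to_real]
  module

/-- Conservation of the squared norm of the angular momentum. -/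
theorem kepler_areal_const (hq : ∀ t, HasDerivAt q (v t) t)
    (hv : ∀ t, HasDerivAt v (-((‖q t‖ ^ 3)⁻¹ • q t)) t) (t₁ t₂ : ℝ) :
    ‖q t₁‖ ^ 2 * ‖v t₁‖ ^ 2 - ⟪q t₁, v t₁⟫ ^ 2 = ‖q t₂‖ ^ 2 * ‖v t₂‖ ^ 2 - ⟪q t₂, v t₂⟫ ^ 2 := by
  refine const_of_hasDerivAt_zero
    (f := fun t => ‖q t‖ ^ 2 * ‖v t‖ ^ 2 - ⟪q t, v t⟫ ^ 2) (fun t => ?_) _ _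
  have h := ((hq t).norm_sq.mul (hv t).norm_sq).sub (((hq t).inner ℝ (hv t)).pow 2)
  refine h.congr_deriv ?_
  simp only [inner_neg_right, inner_smul_right, real_inner_self_eq_norm_sq,
    real_inner_comm (q t) (v t)]
  push_cast
  ring

/-- Conservation of the eccentricity (Laplace) vector. -/
theorem kepler_eccentricity_const (h0 : ∀ t, q t ≠ 0) (hq : ∀ t, HasDerivAt q (v t) t)
    (hv : ∀ t, HasDerivAt v (-((‖q t‖ ^ 3)⁻¹ • q t)) t) (t₁ t₂ : ℝ) :
    (‖v t₁‖ ^ 2 - 1 / ‖q t₁‖) • q t₁ - ⟪q t₁, v t₁⟫ • v t₁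
      = (‖v t₂‖ ^ 2 - 1 / ‖q t₂‖) • q t₂ - ⟪q t₂, v t₂⟫ • v t₂ := by
  refine const_of_hasDerivAt_zero
    (f := fun t => (‖v t‖ ^ 2 - 1 / ‖q t‖) • q t - ⟪q t, v t⟫ • v t) (fun t => ?_) _ _
  have hr : ‖q t‖ ≠ 0 := norm_ne_zero_iff.2 (h0 t)
  have h := (((hv t).norm_sq.sub ((hasDerivAt_const t (1 : ℝ)).div
    (hasDerivAt_norm (hq t) (h0 t)) hr)).smul (hq t)).sub
    (((hq t).inner ℝ (hv t)).smul (hv t))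
  refine h.congr_deriv ?_
  simp only [inner_neg_right, inner_smul_right, real_inner_self_eq_norm_sq,
    real_inner_comm (q t) (v t), Pi.sub_apply, Pi.div_apply]
  match_scalars <;> field_simp <;> ring

/-- A positive function on the whole line with nonincreasing derivative is nondecreasing: a
negative slope would persist and drive it below `0`. -/
theorem deriv_nonneg_of_pos_of_antitone {g g' : ℝ → ℝ} (hg : ∀ t, HasDerivAt g (g' t) t)
    (hanti : Antitone g') (hpos : ∀ t, 0 < g t) (t₀ : ℝ) : 0 ≤ g' t₀ := by
  by_contra! hneg
  have hT : t₀ < t₀ + g t₀ / (-g' t₀) := by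
    have := div_pos (hpos t₀) (neg_pos.2 hneg)
    linarith
  obtain ⟨ξ, hξ, h⟩ := exists_hasDerivAt_eq_slope g g' hT
    (fun t _ => (hg t).continuousAt.continuousWithinAt) (fun t _ => hg t)
  have h1 : g' ξ ≤ g' t₀ := hanti hξ.1.le
  rw [h, add_sub_cancel_left, div_le_iff₀ (div_pos (hpos t₀) (neg_pos.2 hneg))] at h1
  have h2 : g' t₀ * (g t₀ / -g' t₀) = - g t₀ := by
    have := hneg.ne
    field_simp
  linarith [hpos (t₀ + g t₀ / (-g' t₀))]

/-- A Keplerian motion without collision on the whole time axis has nonzero angular momentum: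
otherwise `r = ‖q‖` satisfies `r'' = -1/r²`, so `r` is positive and strictly concave on the line. -/
theorem kepler_areal_pos (h0 : ∀ t, q t ≠ 0) (hq : ∀ t, HasDerivAt q (v t) t)
    (hv : ∀ t, HasDerivAt v (-((‖q t‖ ^ 3)⁻¹ • q t)) t) (t : ℝ) :
    0 < ‖q t‖ ^ 2 * ‖v t‖ ^ 2 - ⟪q t, v t⟫ ^ 2 := by
  have hnn : ⟪q t, v t⟫ ^ 2 ≤ ‖q t‖ ^ 2 * ‖v t‖ ^ 2 := by
    rw [← mul_pow, ← sq_abs]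
    exact pow_le_pow_left₀ (abs_nonneg _) (abs_real_inner_le_norm _ _) 2
  refine lt_of_le_of_ne (sub_nonneg.2 hnn) (fun hzero => ?_)
  have hz : ∀ s, ‖q s‖ ^ 2 * ‖v s‖ ^ 2 - ⟪q s, v s⟫ ^ 2 = 0 := fun s => by
    rw [kepler_areal_const hq hv s t, ← hzero]
  have hpos : ∀ s, 0 < ‖q s‖ := fun s => norm_pos_iff.2 (h0 s)
  have hr : ∀ s, HasDerivAt (fun s => ‖q s‖) (⟪q s, v s⟫ / ‖q s‖) s := fun s =>
    hasDerivAt_norm (hq s) (h0 s)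
  have hr' : ∀ s, HasDerivAt (fun s => ⟪q s, v s⟫ / ‖q s‖) (-(‖q s‖ ^ 2)⁻¹) s := by
    intro s
    have hs := (hpos s).ne'
    refine (((hq s).inner ℝ (hv s)).div (hr s) hs).congr_deriv ?_
    simp only [inner_neg_right, inner_smul_right, real_inner_self_eq_norm_sq]
    have := hz s
    field_simp
    linear_combination this
  have hanti : Antitone (fun s => ⟪q s, v s⟫ / ‖q s‖) :=
    antitone_of_hasDerivAt_nonpos hr' (fun s => by
      have := hpos s
      simp only [Pi.zero_apply, Left.neg_nonpos_iff]; positivity)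
  have h1 := deriv_nonneg_of_pos_of_antitone hr hanti hpos
  -- the same bound for the reversed motion
  have h2 : ∀ s, 0 ≤ -(⟪q (-s), v (-s)⟫ / ‖q (-s)‖) := by
    refine deriv_nonneg_of_pos_of_antitone (g := fun s => ‖q (-s)‖) (fun s => ?_) ?_
      (fun s => hpos _)
    · have := (hr (-s)).scomp s (hasDerivAt_neg s)
      simpa [Function.comp_def] using this
    · intro a b hab
      exact neg_le_neg (hanti (neg_le_neg hab))
  have h3 : ∀ s, ⟪q s, v s⟫ / ‖q s‖ = 0 := fun s =>
    le_antisymm (by simpa using h2 (-s)) (h1 s)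
  have h4 := hr' t
  rw [funext h3] at h4
  have h5 := h4.unique (hasDerivAt_const t (0 : ℝ))
  have := hpos t
  have h6 : 0 < (‖q t‖ ^ 2)⁻¹ := by positivity
  linarith

end Kepler

/-! ### Differentiating an integral with moving endpoints -/

theorem hasDerivAt_integral_endpoint {f : ℝ → ℝ → ℝ} (hf : Continuous (Function.uncurry f))
    {b : ℝ → ℝ} {b' s₀ : ℝ} (hb : HasDerivAt b b' s₀) :
    HasDerivAt (fun s => ∫ t in (b s₀)..(b s), f s t) (b' * f s₀ (b s₀)) s₀ := by
  have hcont : ∀ s, Continuous (f s) := fun s => hf.comp (by fun_prop : Continuous fun t => (s, t))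
  -- the integral is `(b s - b s₀) * f s₀ (b s₀)` up to `o(b s - b s₀)`
  have hlo : (fun s => (∫ t in (b s₀)..(b s), f s t) - (b s - b s₀) * f s₀ (b s₀))
      =o[𝓝 s₀] fun s => s - s₀ := by
    refine Asymptotics.IsLittleO.trans_isBigO ?_ hb.isBigO_sub
    rw [Asymptotics.isLittleO_iff]
    intro ε hε
    have hc := hf.continuousAt (x := (s₀, b s₀))
    obtain ⟨δ, hδ, hball⟩ := Metric.continuousAt_iff.1 hc ε hε
    filter_upwards [Metric.ball_mem_nhds s₀ hδ, hb.continuousAt (Metric.ball_mem_nhds (b s₀) hδ)]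
      with s hs hbs
    have e : (∫ t in (b s₀)..(b s), f s t) - (b s - b s₀) * f s₀ (b s₀)
        = ∫ t in (b s₀)..(b s), (f s t - f s₀ (b s₀)) := by
      rw [integral_sub ((hcont s).intervalIntegrable _ _) (by simp), intervalIntegral.integral_const, smul_eq_mul]
    rw [e, Real.norm_eq_abs (b s - b s₀)]
    refine norm_integral_le_of_norm_le_const (fun t ht => ?_)
    have ht' : dist t (b s₀) < δ := by
      have hbs' : |b s - b s₀| < δ := hbs
      rw [Real.dist_eq]
      exact (Set.abs_sub_left_of_mem_uIcc (Set.uIoc_subset_uIcc ht)).trans_lt hbs'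
    have := hball (x := (s, t)) (by rw [Prod.dist_eq]; exact max_lt hs ht')
    rw [Real.dist_eq] at this
    exact this.le
  have h1 : HasDerivAt (fun s => (b s - b s₀) * f s₀ (b s₀)) (b' * f s₀ (b s₀)) s₀ :=
    (hb.sub_const _).mul_const _
  have h2 : HasDerivAt (fun s => (∫ t in (b s₀)..(b s), f s t) - (b s - b s₀) * f s₀ (b s₀))
      0 s₀ := by
    rw [hasDerivAt_iff_isLittleO]
    simpa using hlo
  have h3 := h2.add h1
  simp only [zero_add] at h3
  exact h3.congr_of_eventuallyEq (Eventually.of_forall fun s => by simp)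

theorem hasDerivAt_integral_param {f f' : ℝ → ℝ → ℝ} (hf : Continuous (Function.uncurry f))
    (hf' : Continuous (Function.uncurry f')) (hd : ∀ s t, HasDerivAt (fun s => f s t) (f' s t) s)
    (α β s₀ : ℝ) :
    HasDerivAt (fun s => ∫ t in α..β, f s t) (∫ t in α..β, f' s₀ t) s₀ := by
  have hcont : ∀ s, Continuous (f s) := fun s => hf.comp (by fun_prop : Continuous fun t => (s, t))
  have hcont' : ∀ s, Continuous (f' s) := fun s =>
    hf'.comp (by fun_prop : Continuous fun t => (s, t))
  obtain ⟨C, hC⟩ := ((isCompact_closedBall s₀ (1 : ℝ)).prod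
    (isCompact_uIcc (a := α) (b := β))).exists_bound_of_continuousOn hf'.continuousOn
  refine (hasDerivAt_integral_of_dominated_loc_of_deriv_le (bound := fun _ => C)
    (Metric.ball_mem_nhds s₀ one_pos) (Eventually.of_forall fun s => (hcont s).aestronglyMeasurable)
    ((hcont s₀).intervalIntegrable _ _) (hcont' s₀).aestronglyMeasurable ?_ (by simp) ?_).2
  · exact Eventually.of_forall fun t ht s hs =>
      hC (s, t) ⟨Metric.ball_subset_closedBall hs, Set.uIoc_subset_uIcc ht⟩
  · exact Eventually.of_forall fun t ht s hs => hd s t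

/-- Leibniz rule with moving endpoints. The endpoints are only assumed differentiable at the given
point. -/
theorem hasDerivAt_integral_leibniz {f f' : ℝ → ℝ → ℝ} (hf : Continuous (Function.uncurry f))
    (hf' : Continuous (Function.uncurry f')) (hd : ∀ s t, HasDerivAt (fun s => f s t) (f' s t) s)
    {a b : ℝ → ℝ} {a' b' s₀ : ℝ} (ha : HasDerivAt a a' s₀) (hb : HasDerivAt b b' s₀) :
    HasDerivAt (fun s => ∫ t in (a s)..(b s), f s t)
      ((∫ t in (a s₀)..(b s₀), f' s₀ t) + b' * f s₀ (b s₀) - a' * f s₀ (a s₀)) s₀ := by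
  have h := ((hasDerivAt_integral_param hf hf' hd (a s₀) (b s₀) s₀).add
    (hasDerivAt_integral_endpoint hf hb)).sub (hasDerivAt_integral_endpoint hf ha)
  refine h.congr_of_eventuallyEq (Eventually.of_forall fun s => ?_)
  have hi : ∀ x y, IntervalIntegrable (f s) volume x y := fun x y =>
    (hf.comp (by fun_prop : Continuous fun t => (s, t))).intervalIntegrable _ _
  simp only [Pi.add_apply, Pi.sub_apply]
  rw [integral_add_adjacent_intervals (hi _ _) (hi _ _)]
  exact (integral_interval_sub_left (hi _ _) (hi _ _)).symm

/-! ### Variation of the family of arcs -/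

/-- The partial derivatives `v = ∂_t q`, `δ = ∂_s q` and `m = ∂_s ∂_t q = ∂_t ∂_s q` of a `C²` family,
with the chain rule along a moving endpoint `s ↦ q s (b s)`. -/
theorem exists_partials {E : Type*} [NormedAddCommGroup E] [NormedSpace ℝ E]
    {q : ℝ → ℝ → E} (hsm : ContDiff ℝ 2 (Function.uncurry q)) :
    ∃ v δ m : ℝ → ℝ → E,
      (∀ s t, HasDerivAt (q s) (v s t) t) ∧ (∀ s t, HasDerivAt (fun s => q s t) (δ s t) s) ∧
      (∀ s t, HasDerivAt (fun s => v s t) (m s t) s) ∧ (∀ s t, HasDerivAt (δ s) (m s t) t) ∧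
      (∀ s t, DifferentiableAt ℝ (v s) t) ∧
      Continuous (Function.uncurry v) ∧ Continuous (Function.uncurry m) ∧
      ∀ (b : ℝ → ℝ) (b' s : ℝ), HasDerivAt b b' s →
        HasDerivAt (fun s => q s (b s)) (δ s (b s) + b' • v s (b s)) s := by
  obtain ⟨D, hD⟩ : ∃ D, D = fderiv ℝ (Function.uncurry q) := ⟨_, rfl⟩
  have hq : ∀ x, HasFDerivAt (Function.uncurry q) (D x) x := fun x => by
    rw [hD]; exact (hsm.differentiable (by norm_num) x).hasFDerivAt
  have hDc : ContDiff ℝ 1 D := by rw [hD]; exact hsm.fderiv_right (by norm_num)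
  have hD' : ∀ x, HasFDerivAt D (fderiv ℝ D x) x := fun x =>
    (hDc.differentiable (by norm_num) x).hasFDerivAt
  have hD'c : Continuous (fderiv ℝ D) := hDc.continuous_fderiv (by norm_num)
  have hsymm : ∀ x y z, fderiv ℝ D x y z = fderiv ℝ D x z y := fun x y z => by
    have h := (hsm.contDiffAt (x := x)).isSymmSndFDerivAt (by simp)
    rw [hD]; exact h.eq y z
  have ht : ∀ s t : ℝ, HasDerivAt (fun t : ℝ => (s, t)) ((0 : ℝ), (1 : ℝ)) t := fun s t =>
    (hasDerivAt_const t s).prodMk (hasDerivAt_id t)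
  have hs : ∀ s t : ℝ, HasDerivAt (fun s : ℝ => (s, t)) ((1 : ℝ), (0 : ℝ)) s := fun s t =>
    (hasDerivAt_id s).prodMk (hasDerivAt_const s t)
  have hDt : ∀ (s t : ℝ) (y : ℝ × ℝ),
      HasDerivAt (fun t => D (s, t) y) (fderiv ℝ D (s, t) (0, 1) y) t := fun s t y => by
    have h := (hD' (s, t)).comp_hasDerivAt t (ht s t)
    simpa [Function.comp_def] using h.clm_apply (hasDerivAt_const t y)
  have hDs : ∀ (s t : ℝ) (y : ℝ × ℝ),
      HasDerivAt (fun s => D (s, t) y) (fderiv ℝ D (s, t) (1, 0) y) s := fun s t y => by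
    have h := (hD' (s, t)).comp_hasDerivAt s (hs s t)
    simpa [Function.comp_def] using h.clm_apply (hasDerivAt_const s y)
  refine ⟨fun s t => D (s, t) (0, 1), fun s t => D (s, t) (1, 0),
    fun s t => fderiv ℝ D (s, t) (1, 0) (0, 1), fun s t => (hq (s, t)).comp_hasDerivAt t (ht s t),
    fun s t => HasFDerivAt.comp_hasDerivAt (f := fun s => (s, t)) s (hq (s, t)) (hs s t), fun s t => hDs s t _, fun s t => ?_,
    fun s t => (hDt s t _).differentiableAt, ?_, ?_, fun b b' s hb => ?_⟩
  · exact (hDt s t (1, 0)).congr_deriv (hsymm _ _ _)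
  · exact (hDc.continuous.clm_apply continuous_const)
  · exact ((hD'c.clm_apply continuous_const).clm_apply continuous_const)
  · have hc := (hq (s, b s)).comp_hasDerivAt s ((hasDerivAt_id s).prodMk hb)
    have e : ((1 : ℝ), b') = (1, 0) + b' • ((0 : ℝ), (1 : ℝ)) := by simp
    rw [e, map_add, map_smul] at hc
    exact hc

/-- First variation of the Maupertuis action at fixed energy: by conservation of energy in `s` and
Newton's equation, `∂_s ‖v‖² = ∂_t ⟪v, δ⟫`, so that only boundary terms remain. -/
theorem hasDerivAt_action {E : Type*} [NormedAddCommGroup E] [InnerProductSpace ℝ E]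
    {q v δ m : ℝ → ℝ → E} {s₀ : ℝ} (h0 : ∀ t, q s₀ t ≠ 0)
    (hqs : ∀ s t, HasDerivAt (fun s => q s t) (δ s t) s)
    (hvs : ∀ s t, HasDerivAt (fun s => v s t) (m s t) s)
    (hδt : ∀ s t, HasDerivAt (δ s) (m s t) t)
    (hv : ∀ t, HasDerivAt (v s₀) (-((‖q s₀ t‖ ^ 3)⁻¹ • q s₀ t)) t)
    (hvc : Continuous (Function.uncurry v)) (hmc : Continuous (Function.uncurry m))
    (hE : ∀ t, ∃ c : ℝ, ∀ᶠ s in 𝓝 s₀, 1 / 2 * ‖v s t‖ ^ 2 - 1 / ‖q s t‖ = c)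
    {a b : ℝ → ℝ} {a' b' : ℝ} (ha : HasDerivAt a a' s₀) (hb : HasDerivAt b b' s₀) :
    HasDerivAt (fun s => ∫ t in (a s)..(b s), ‖v s t‖ ^ 2)
      (⟪v s₀ (b s₀), δ s₀ (b s₀) + b' • v s₀ (b s₀)⟫
        - ⟪v s₀ (a s₀), δ s₀ (a s₀) + a' • v s₀ (a s₀)⟫) s₀ := by
  have hfc : Continuous (Function.uncurry fun s t => ‖v s t‖ ^ 2) := hvc.norm.pow 2
  have hfc' : Continuous (Function.uncurry fun s t => 2 * ⟪v s t, m s t⟫) :=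
    continuous_const.mul (hvc.inner hmc)
  have hmain := hasDerivAt_integral_leibniz hfc hfc' (fun s t => (hvs s t).norm_sq) ha hb
  have henergy : ∀ t, ⟪v s₀ t, m s₀ t⟫ + (‖q s₀ t‖ ^ 3)⁻¹ * ⟪q s₀ t, δ s₀ t⟫ = 0 := by
    intro t
    obtain ⟨c, hc⟩ := hE t
    have hr : ‖q s₀ t‖ ≠ 0 := norm_ne_zero_iff.2 (h0 t)
    have h1 := ((hvs s₀ t).norm_sq.const_mul (1 / 2 : ℝ)).sub
      ((hasDerivAt_const s₀ (1 : ℝ)).div (hasDerivAt_norm (hqs s₀ t) (h0 t)) hr)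
    have h2 : HasDerivAt (fun s => 1 / 2 * ‖v s t‖ ^ 2 - 1 / ‖q s t‖) 0 s₀ :=
      (hasDerivAt_const s₀ c).congr_of_eventuallyEq hc
    rw [← h1.unique h2]
    field_simp
    ring
  have hvδ : ∀ t, HasDerivAt (fun t => ⟪v s₀ t, δ s₀ t⟫) (2 * ⟪v s₀ t, m s₀ t⟫) t := by
    intro t
    refine ((hv t).inner ℝ (hδt s₀ t)).congr_deriv ?_
    rw [inner_neg_left, inner_smul_left, RCLike.conj_to_real]
    linear_combination -henergy t
  have hint := integral_eq_sub_of_hasDerivAt (a := a s₀) (b := b s₀) (fun t _ => hvδ t)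
    ((hfc'.comp (by fun_prop : Continuous fun t => (s₀, t))).intervalIntegrable _ _)
  refine hmain.congr_deriv ?_
  rw [hint]
  simp only [inner_add_right, inner_smul_right, real_inner_self_eq_norm_sq]
  ring

/-- The infinitesimal form of the three geometric constraints. -/
theorem constraints_deriv {E : Type*} [NormedAddCommGroup E] [InnerProductSpace ℝ E]
    {J : Set ℝ} (hJ : IsOpen J) {A B : ℝ → E} {A' B' : E} {s₀ : ℝ} (hs₀ : s₀ ∈ J)
    (hA0 : ∀ s ∈ J, A s ≠ 0) (hB0 : ∀ s ∈ J, B s ≠ 0)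
    (hA : HasDerivAt A A' s₀) (hB : HasDerivAt B B' s₀)
    (hchord : ∀ s₁ ∈ J, ∀ s₂ ∈ J, ‖B s₁ - A s₁‖ = ‖B s₂ - A s₂‖)
    (hsum : ∀ s₁ ∈ J, ∀ s₂ ∈ J, ‖A s₁‖ + ‖B s₁‖ = ‖A s₂‖ + ‖B s₂‖) :
    ⟪A s₀, A'⟫ / ‖A s₀‖ + ⟪B s₀, B'⟫ / ‖B s₀‖ = 0 ∧ ⟪B s₀ - A s₀, B' - A'⟫ = 0 ∧
    (A s₀ = B s₀ → A' = B') ∧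
    (‖B s₀ - A s₀‖ = ‖A s₀‖ + ‖B s₀‖ →
      ∃ μ : ℝ, ‖A s₀‖ • B' + ‖B s₀‖ • A' = μ • (B s₀ - A s₀)) := by
  have hnhds : ∀ᶠ s in 𝓝 s₀, s ∈ J := hJ.mem_nhds hs₀
  have hnA := hasDerivAt_norm hA (hA0 s₀ hs₀)
  have hnB := hasDerivAt_norm hB (hB0 s₀ hs₀)
  have h1 : ⟪A s₀, A'⟫ / ‖A s₀‖ + ⟪B s₀, B'⟫ / ‖B s₀‖ = 0 :=
    (hnA.add hnB).unique ((hasDerivAt_const s₀ (‖A s₀‖ + ‖B s₀‖)).congr_of_eventuallyEq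
      (hnhds.mono fun s hs => hsum s hs s₀ hs₀))
  refine ⟨h1, ?_, ?_, ?_⟩
  · have h := (hB.sub hA).norm_sq.unique
      ((hasDerivAt_const s₀ (‖B s₀ - A s₀‖ ^ 2)).congr_of_eventuallyEq
      (hnhds.mono fun s hs => by
        simp only [Pi.sub_apply]; rw [hchord s hs s₀ hs₀]))
    simpa using h
  · intro h
    refine hA.unique (hB.congr_of_eventuallyEq (hnhds.mono fun s hs => ?_))
    have := hchord s hs s₀ hs₀
    rw [h, sub_self, norm_zero, norm_eq_zero, sub_eq_zero] at this
    exact this.symm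
  · intro h
    -- equality in the triangle inequality persists along the family
    have hopp : ∀ s ∈ J, ‖A s‖ • B s + ‖B s‖ • A s = 0 := by
      intro s hs
      have h2 : ‖B s - A s‖ = ‖A s‖ + ‖B s‖ := by
        rw [hchord s hs s₀ hs₀, h, hsum s hs s₀ hs₀]
      have h3 := norm_sub_sq_real (B s) (A s)
      rw [h2] at h3
      have h4 : ⟪B s, A s⟫ = -(‖A s‖ * ‖B s‖) := by linarith
      rw [← norm_eq_zero, ← sq_eq_zero_iff, norm_add_sq_real, norm_smul, norm_smul,
        inner_smul_left, inner_smul_right, h4, norm_norm, norm_norm, RCLike.conj_to_real]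
      ring
    have h5 := ((hnA.smul hB).add (hnB.smul hA)).unique
      ((hasDerivAt_const s₀ (0 : E)).congr_of_eventuallyEq (hnhds.mono fun s hs => hopp s hs))
    have h6 : ⟪B s₀, B'⟫ / ‖B s₀‖ = -(⟪A s₀, A'⟫ / ‖A s₀‖) := by linarith
    rw [h6] at h5
    refine ⟨-(⟪A s₀, A'⟫ / ‖A s₀‖), ?_⟩
    rw [← sub_eq_zero, ← h5]
    module


/-- Hamilton / Proposition 1: For a C² one-parameter family of Keplerian
arcs `s ↦ (a(s), b(s), q(s, ·))` in `ℝ^d ∖ {0}`, if the chord length `‖B − A‖`, the sum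
of the radii `‖A‖ + ‖B‖` and the energy `H` are constant on `J`, then the Maupertuis
action `w(s) = ∫_{a(s)}^{b(s)} ‖∂_t q(s,t)‖² dt` is constant on `J`. -/
theorem maupertuis_action_constant
    (d : ℕ) (hd : 1 ≤ d)
    (J : Set ℝ) (hJ : IsOpen J) (hJ' : J.OrdConnected)
    (a b : ℝ → ℝ)
    (ha : ∀ s ∈ J, DifferentiableAt ℝ a s)
    (hb : ∀ s ∈ J, DifferentiableAt ℝ b s)
    (hab : ∀ s ∈ J, a s < b s)
    (q : ℝ → ℝ → EuclideanSpace ℝ (Fin d))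
    (hsm : ContDiff ℝ 2 (Function.uncurry q))
    (hne : ∀ s ∈ J, ∀ t : ℝ, q s t ≠ 0)
    (hN : ∀ s ∈ J, ∀ t : ℝ,
      deriv (deriv (q s)) t = -((‖q s t‖ ^ 3)⁻¹ • q s t))
    (H : ℝ → ℝ)
    (hH : ∀ s ∈ J, ∀ t : ℝ,
      H s = (1 / 2) * ‖deriv (q s) t‖ ^ 2 - 1 / ‖q s t‖)
    (hchord : ∀ s₁ ∈ J, ∀ s₂ ∈ J,
      ‖q s₁ (b s₁) - q s₁ (a s₁)‖ = ‖q s₂ (b s₂) - q s₂ (a s₂)‖)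
    (hsum : ∀ s₁ ∈ J, ∀ s₂ ∈ J,
      ‖q s₁ (a s₁)‖ + ‖q s₁ (b s₁)‖ = ‖q s₂ (a s₂)‖ + ‖q s₂ (b s₂)‖)
    (hen : ∀ s₁ ∈ J, ∀ s₂ ∈ J, H s₁ = H s₂) :
    ∀ s₁ ∈ J, ∀ s₂ ∈ J,
      (∫ t in (a s₁)..(b s₁), ‖deriv (q s₁) t‖ ^ 2) =
      (∫ t in (a s₂)..(b s₂), ‖deriv (q s₂) t‖ ^ 2) := by
  obtain ⟨v, δ, m, hqt, hqs, hvs, hδt, hvd, hvc, hmc, hend⟩ := exists_partials hsm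
  have hqv : ∀ s, deriv (q s) = v s := fun s => funext fun t => (hqt s t).deriv
  simp only [hqv] at hN hH ⊢
  have hv : ∀ s ∈ J, ∀ t, HasDerivAt (v s) (-((‖q s t‖ ^ 3)⁻¹ • q s t)) t := fun s hs t => by
    rw [← hN s hs t]; exact (hvd s t).hasDerivAt
  have hzero : ∀ s ∈ J, HasDerivAt (fun s => ∫ t in (a s)..(b s), ‖v s t‖ ^ 2) 0 s := by
    intro s hs
    have ha' := (ha s hs).hasDerivAt
    have hb' := (hb s hs).hasDerivAt
    refine (hasDerivAt_action (hne s hs) hqs hvs hδt (hv s hs) hvc hmc (fun t => ⟨H s, ?_⟩)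
      ha' hb').congr_deriv ?_
    · filter_upwards [hJ.mem_nhds hs] with s' hs'
      rw [← hH s' hs' t, hen s' hs' s hs]
    · obtain ⟨h1, h2, h3, h4⟩ := constraints_deriv hJ hs (fun s hs => hne s hs (a s))
        (fun s hs => hne s hs (b s)) (hend a _ s ha') (hend b _ s hb') hchord hsum
      exact sub_eq_zero.2 <| endpoint_identity (hne s hs _) (hne s hs _)
        (kepler_areal_pos (hne s hs) (hqt s) (hv s hs) _)
        (kepler_areal_pos (hne s hs) (hqt s) (hv s hs) _)
        (fun x => kepler_momentum_const (hqt s) (hv s hs) x _ _)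
        (kepler_eccentricity_const (hne s hs) (hqt s) (hv s hs) _ _) h1 h2 h3 h4
  intro s₁ hs₁ s₂ hs₂
  exact hJ.is_const_of_deriv_eq_zero hJ'.isPreconnected
    (fun s hs => (hzero s hs).differentiableAt.differentiableWithinAt)
    (fun s hs => (hzero s hs).deriv) hs₁ hs₂
end

section
/- Lambert's theorem (smooth-family version). Fix d ≥ 1. Let J ⊆ ℝ be an open interval, a, b : J → ℝ differentiable with a(s) < b(s) for all s, and q : J × ℝ → ℝ^d ∖ {0} a C² map such that for each s ∈ J the curve t ↦ q(s, t) solves Newton's system ∂²q/∂t² = −q/‖q‖³. Define the endpoints A(s) = q(s, a(s)), B(s) = q(s, b(s)) and the energy H(s) = ½‖∂_t q(s, t)‖² − 1/‖q(s, t)‖ (independent of t). If the chord length s ↦ ‖B(s) − A(s)‖, the sum of radii s ↦ ‖A(s)‖ + ‖B(s)‖, and the energy s ↦ H(s) are constant on J, then the elapsed time s ↦ b(s) − a(s) is constant on J. -/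
/-!
Along a Kepler solution `q` with velocity `v` put `r = ‖q‖`, `σ = ⟪q, v⟫` and `K = -2H`, so that
`‖v‖² = 2/r - K`. Then `r' = σ/r` and `σ' = 1/r - K`, hence `u = σ + K t` satisfies `u' = 1/r`: it is
the eccentric anomaly, and `Δu = Δσ + K Δt` is Kepler's equation. In the variable `u` the motion is
linear: `dσ/du = ρ` and `dρ/du = -K σ` for `ρ = 1 - K r`, while `dw/du = f` and `df/du = -K w` for
`w = r v` and `f = σ v - q/r`; moreover `f + K q` is constant.

Writing `θ = Δu`, `G = Δσ` and `C`, `S` for the solutions of `y'' = -K y` with `C 0 = 1`, `S 0 = 0`,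
`S' 0 = 1`, the chord `c` and the sum of radii `R` satisfy (for `K ≠ 0`)
`K² c² + K G² = 2 (1 - C θ)` and `(2 - K R) (1 - C θ) = K G S θ`.
Given `K`, `c`, `R`, these leave finitely many values for `C θ`, so countably many for `θ` and `G`,
and so countably many for `Δt = (θ - G) / K`. For `K = 0` they become
`c² = R G² - G⁴/4` and `Δt = R G/2 - G³/12`, with the same conclusion.

Thus along the family the continuous function `b - a` takes values in a fixed countable set; on an
interval it must be constant.
-/

open scoped InnerProductSpace

/-! ### A Kepler arc and its derived quantities -/

/-- `q` is a global collision-free Kepler motion with velocity `v` and energy `-K / 2`. -/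
structure KeplerMotion {E : Type*} [NormedAddCommGroup E] [InnerProductSpace ℝ E]
    (K : ℝ) (q v : ℝ → E) : Prop where
  ne : ∀ t, q t ≠ 0
  dq : ∀ t, HasDerivAt q (v t) t
  dv : ∀ t, HasDerivAt v (-((‖q t‖ ^ 3)⁻¹ • q t)) t
  energy : ∀ t, ‖v t‖ ^ 2 = 2 / ‖q t‖ - K

namespace KeplerMotion

variable {E : Type*} [NormedAddCommGroup E] [InnerProductSpace ℝ E] {K : ℝ} {q v : ℝ → E}

/-- `f = σ v - q / r`, the second derivative of `q` with respect to the eccentric anomaly. -/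
noncomputable def force (q v : ℝ → E) (t : ℝ) : E := ⟪q t, v t⟫_ℝ • v t - ‖q t‖⁻¹ • q t

lemma pos (h : KeplerMotion K q v) (t : ℝ) : 0 < ‖q t‖ := norm_pos_iff.2 (h.ne t)

lemma hasDerivAt_norm (h : KeplerMotion K q v) (t : ℝ) :
    HasDerivAt (fun t => ‖q t‖) (⟪q t, v t⟫_ℝ / ‖q t‖) t := by
  have h1 := ((h.dq t).norm_sq).sqrt (by have := h.pos t; positivity)
  simp only [Real.sqrt_sq (norm_nonneg _)] at h1
  refine HasDerivAt.congr_deriv (h1) ?_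
  have := (h.pos t).ne'
  field_simp

lemma hasDerivAt_sigma (h : KeplerMotion K q v) (t : ℝ) :
    HasDerivAt (fun t => ⟪q t, v t⟫_ℝ) (‖q t‖⁻¹ - K) t := by
  refine HasDerivAt.congr_deriv ((h.dq t).inner ℝ (h.dv t)) ?_
  have := (h.pos t).ne'
  rw [inner_neg_right, inner_smul_right, real_inner_self_eq_norm_sq, real_inner_self_eq_norm_sq,
    h.energy]
  field_simp
  ring

lemma hasDerivAt_inv_norm (h : KeplerMotion K q v) (t : ℝ) :
    HasDerivAt (fun t => ‖q t‖⁻¹) (-(⟪q t, v t⟫_ℝ * (‖q t‖ ^ 3)⁻¹)) t := by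
  refine HasDerivAt.congr_deriv ((h.hasDerivAt_norm t).inv (h.pos t).ne') ?_
  have := (h.pos t).ne'
  field_simp

lemma hasDerivAt_force (h : KeplerMotion K q v) (t : ℝ) :
    HasDerivAt (force q v) (-(K • v t)) t := by
  refine HasDerivAt.congr_deriv (((h.hasDerivAt_sigma t).smul (h.dv t)).sub ((h.hasDerivAt_inv_norm t).smul (h.dq t))) ?_
  module

lemma hasDerivAt_w (h : KeplerMotion K q v) (t : ℝ) :
    HasDerivAt (fun t => ‖q t‖ • v t) (‖q t‖⁻¹ • force q v t) t := by
  refine HasDerivAt.congr_deriv ((h.hasDerivAt_norm t).smul (h.dv t)) ?_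
  have := (h.pos t).ne'
  simp only [force]
  match_scalars <;> field_simp

lemma norm_force_sq (h : KeplerMotion K q v) (t : ℝ) :
    ‖force q v t‖ ^ 2 = 1 - K * ⟪q t, v t⟫_ℝ ^ 2 := by
  have := (h.pos t).ne'
  rw [force, norm_sub_sq_real, norm_smul, norm_smul, inner_smul_left, inner_smul_right,
    real_inner_comm, mul_pow, h.energy]
  simp
  field_simp
  ring

lemma inner_force_w (h : KeplerMotion K q v) (t : ℝ) :
    ⟪force q v t, ‖q t‖ • v t⟫_ℝ = ⟪q t, v t⟫_ℝ * (1 - K * ‖q t‖) := by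
  have := (h.pos t).ne'
  rw [force, inner_smul_right, inner_sub_left, inner_smul_left, inner_smul_left,
    real_inner_self_eq_norm_sq, h.energy]
  simp
  field_simp
  ring

lemma norm_w_sq (h : KeplerMotion K q v) (t : ℝ) :
    ‖‖q t‖ • v t‖ ^ 2 = 2 * ‖q t‖ - K * ‖q t‖ ^ 2 := by
  have := (h.pos t).ne'
  rw [norm_smul, mul_pow, h.energy, norm_norm]
  field_simp

lemma const_of_hasDerivAt_zero {F : Type*} [NormedAddCommGroup F] [NormedSpace ℝ F] {g : ℝ → F}
    (hg : ∀ t, HasDerivAt g 0 t) (x y : ℝ) : g x = g y :=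
  is_const_of_deriv_eq_zero (fun t => (hg t).differentiableAt) (fun t => (hg t).deriv) x y

/-! ### Relations between the chord, the sum of radii and the eccentric anomaly -/

/-- The eccentric anomaly measured from time `t₀`; its `t`-derivative is `1 / r`. -/
noncomputable def anomaly (K : ℝ) (q v : ℝ → E) (t₀ t : ℝ) : ℝ :=
  ⟪q t, v t⟫_ℝ - ⟪q t₀, v t₀⟫_ℝ + K * (t - t₀)

lemma hasDerivAt_anomaly (h : KeplerMotion K q v) (t₀ t : ℝ) :
    HasDerivAt (anomaly K q v t₀) ‖q t‖⁻¹ t := by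
  refine HasDerivAt.congr_deriv (((h.hasDerivAt_sigma t).sub_const (⟪q t₀, v t₀⟫_ℝ)).add
    (((hasDerivAt_id t).sub_const t₀).const_mul K)) ?_
  ring

/-- The chord and radii relations for nonzero energy, in terms of the cosine-like and sine-like
solutions `C`, `S` of `y'' = -K y`. -/
lemma relations (h : KeplerMotion K q v) {C S : ℝ → ℝ} (hC0 : C 0 = 1) (hS0 : S 0 = 0)
    (hC : ∀ x, HasDerivAt C (-(K * S x)) x) (hS : ∀ x, HasDerivAt S (C x) x) (α β : ℝ) :
    K ^ 2 * ‖q β - q α‖ ^ 2 + K * (⟪q β, v β⟫_ℝ - ⟪q α, v α⟫_ℝ) ^ 2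
        = 2 * (1 - C (anomaly K q v α β)) ∧
      (2 - K * (‖q α‖ + ‖q β‖)) * (1 - C (anomaly K q v α β))
        = K * (⟪q β, v β⟫_ℝ - ⟪q α, v α⟫_ℝ) * S (anomaly K q v α β) ∧
      C (anomaly K q v α β) ^ 2 + K * S (anomaly K q v α β) ^ 2 = 1 := by
  have h0 : anomaly K q v α α = 0 := by simp [anomaly]
  have dC : ∀ t, HasDerivAt (fun t => C (anomaly K q v α t))
      (-(K * S (anomaly K q v α t)) * ‖q t‖⁻¹) t := fun t => (hC _).comp t (h.hasDerivAt_anomaly α t)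
  have dS : ∀ t, HasDerivAt (fun t => S (anomaly K q v α t))
      (C (anomaly K q v α t) * ‖q t‖⁻¹) t := fun t => (hS _).comp t (h.hasDerivAt_anomaly α t)
  have hCS : C (anomaly K q v α β) ^ 2 + K * S (anomaly K q v α β) ^ 2 = 1 := by
    have := const_of_hasDerivAt_zero (g := fun x => C x ^ 2 + K * S x ^ 2) (fun x => by
      refine HasDerivAt.congr_deriv (((hC x).pow 2).add (((hS x).pow 2).const_mul K)) ?_
      simp
      ring) (anomaly K q v α β) 0
    simpa [hC0, hS0] using this
  -- The linear flow in the anomaly, inverted: initial data are conserved along the motion.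
  have c1 := const_of_hasDerivAt_zero (g := fun t => ⟪q t, v t⟫_ℝ * C (anomaly K q v α t)
      - (1 - K * ‖q t‖) * S (anomaly K q v α t)) (fun t => by
    refine HasDerivAt.congr_deriv (((h.hasDerivAt_sigma t).mul (dC t)).sub
      ((((h.hasDerivAt_norm t).const_mul K).const_sub 1).mul (dS t))) ?_
    have := (h.pos t).ne'
    field_simp
    ring) β α
  have c2 := const_of_hasDerivAt_zero (g := fun t => (1 - K * ‖q t‖) * C (anomaly K q v α t)
      + K * (⟪q t, v t⟫_ℝ * S (anomaly K q v α t))) (fun t => by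
    refine HasDerivAt.congr_deriv (((((h.hasDerivAt_norm t).const_mul K).const_sub 1).mul (dC t)).add
      (((h.hasDerivAt_sigma t).mul (dS t)).const_mul K)) ?_
    have := (h.pos t).ne'
    field_simp
    ring) β α
  have c3 := const_of_hasDerivAt_zero (g := fun t => C (anomaly K q v α t) • force q v t
      + K • S (anomaly K q v α t) • (‖q t‖ • v t)) (fun t => by
    refine HasDerivAt.congr_deriv (((dC t).smul (h.hasDerivAt_force t)).add
      (((dS t).smul (h.hasDerivAt_w t)).const_smul K)) ?_
    have := (h.pos t).ne'
    match_scalars <;> field_simp <;> ring) β α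
  have c4 := const_of_hasDerivAt_zero (g := fun t => C (anomaly K q v α t) • (‖q t‖ • v t)
      - S (anomaly K q v α t) • force q v t) (fun t => by
    refine HasDerivAt.congr_deriv (((dC t).smul (h.hasDerivAt_w t)).sub ((dS t).smul (h.hasDerivAt_force t))) ?_
    have := (h.pos t).ne'
    match_scalars <;> field_simp <;> ring) β α
  have c5 := const_of_hasDerivAt_zero (g := fun t => force q v t + K • q t) (fun t => by
    refine HasDerivAt.congr_deriv ((h.hasDerivAt_force t).add ((h.dq t).const_smul K)) ?_
    module) β α
  simp only [h0, hC0, hS0] at c1 c2 c3 c4 c5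
  have n1 := h.norm_force_sq α
  have n2 := h.inner_force_w α
  have n3 := h.norm_w_sq α
  generalize anomaly K q v α β = θ at *
  have e1 : ⟪q β, v β⟫_ℝ = C θ * ⟪q α, v α⟫_ℝ + S θ * (1 - K * ‖q α‖) := by
    linear_combination C θ * c1 + S θ * c2 - ⟪q β, v β⟫_ℝ * hCS
  have e2 : 1 - K * ‖q β‖ = C θ * (1 - K * ‖q α‖) - K * S θ * ⟪q α, v α⟫_ℝ := by
    linear_combination C θ * c2 - K * S θ * c1 - (1 - K * ‖q β‖) * hCS
  have e3 : force q v β = C θ • force q v α - (K * S θ) • (‖q α‖ • v α) := by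
    have c3' : force q v α = C θ • force q v β + K • S θ • (‖q β‖ • v β) := by
      rw [c3]; module
    have c4' : ‖q α‖ • v α = C θ • (‖q β‖ • v β) - S θ • force q v β := by
      rw [c4]; module
    rw [c3', c4']
    match_scalars
    · linear_combination -hCS
    · ring
  have e4 : K ^ 2 * ‖q β - q α‖ ^ 2 = ‖force q v β - force q v α‖ ^ 2 := by
    have : force q v β - force q v α = (-K) • (q β - q α) := by
      rw [eq_sub_of_add_eq c5]; module
    rw [this, norm_smul, mul_pow]
    simp
  have e5 : ‖force q v β - force q v α‖ ^ 2 = (C θ - 1) ^ 2 * ‖force q v α‖ ^ 2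
      - 2 * ((C θ - 1) * (K * S θ) * ⟪force q v α, ‖q α‖ • v α⟫_ℝ)
      + (K * S θ) ^ 2 * ‖‖q α‖ • v α‖ ^ 2 := by
    have : force q v β - force q v α
        = (C θ - 1) • force q v α - (K * S θ) • (‖q α‖ • v α) := by
      rw [e3]; module
    rw [this, norm_sub_sq_real, norm_smul, norm_smul (K * S θ), inner_smul_left, inner_smul_right,
      mul_pow, mul_pow]
    simp only [Real.norm_eq_abs, sq_abs, conj_trivial]
    ring
  rw [n1, n2, n3] at e5
  refine ⟨?_, ?_, hCS⟩
  · rw [e4, e5, e1]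
    linear_combination hCS
  · have : 2 - K * (‖q α‖ + ‖q β‖) = (1 - K * ‖q α‖) + (1 - K * ‖q β‖) := by ring
    rw [this, e2, e1]
    linear_combination (-(1 - K * ‖q α‖)) * hCS

/-- Chord and elapsed time for parabolic motion, in terms of `G = Δσ` and the sum of radii. -/
lemma relations_zero (h : KeplerMotion 0 q v) (α β : ℝ) :
    ‖q β - q α‖ ^ 2 = (‖q α‖ + ‖q β‖) * (⟪q β, v β⟫_ℝ - ⟪q α, v α⟫_ℝ) ^ 2
        - (⟪q β, v β⟫_ℝ - ⟪q α, v α⟫_ℝ) ^ 4 / 4 ∧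
      β - α = (‖q α‖ + ‖q β‖) * (⟪q β, v β⟫_ℝ - ⟪q α, v α⟫_ℝ) / 2
        - (⟪q β, v β⟫_ℝ - ⟪q α, v α⟫_ℝ) ^ 3 / 12 := by
  have c1 := const_of_hasDerivAt_zero (g := fun t => ‖q t‖ - ⟪q t, v t⟫_ℝ ^ 2 / 2) (fun t => by
    refine HasDerivAt.congr_deriv ((h.hasDerivAt_norm t).sub (((h.hasDerivAt_sigma t).pow 2).div_const 2)) ?_
    have := (h.pos t).ne'
    simp
    field_simp
    ring) β α
  have c2 := const_of_hasDerivAt_zero (g := fun t => ⟪q t, v t⟫_ℝ * ‖q t‖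
      - ⟪q t, v t⟫_ℝ ^ 3 / 3 - t) (fun t => by
    refine HasDerivAt.congr_deriv ((((h.hasDerivAt_sigma t).mul (h.hasDerivAt_norm t)).sub
      (((h.hasDerivAt_sigma t).pow 3).div_const 3)).sub (hasDerivAt_id t)) ?_
    have := (h.pos t).ne'
    simp
    field_simp
    ring) β α
  have c3 := const_of_hasDerivAt_zero (g := force q v) (fun t => by
    simpa using h.hasDerivAt_force t) β α
  have c4 := const_of_hasDerivAt_zero
      (g := fun t => ‖q t‖ • v t - ⟪q t, v t⟫_ℝ • force q v t) (fun t => by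
    refine HasDerivAt.congr_deriv ((h.hasDerivAt_w t).sub ((h.hasDerivAt_sigma t).smul (h.hasDerivAt_force t))) ?_
    module) β α
  have c5 := const_of_hasDerivAt_zero
      (g := fun t => q t - ⟪q t, v t⟫_ℝ • (‖q t‖ • v t)
        + (⟪q t, v t⟫_ℝ ^ 2 / 2) • force q v t) (fun t => by
    refine HasDerivAt.congr_deriv (((h.dq t).sub ((h.hasDerivAt_sigma t).smul (h.hasDerivAt_w t))).add
      ((((h.hasDerivAt_sigma t).pow 2).div_const 2).smul (h.hasDerivAt_force t))) ?_
    have := (h.pos t).ne'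
    match_scalars <;> simp <;> field_simp <;> ring) β α
  have n1 := h.norm_force_sq α
  have n2 := h.inner_force_w α
  have n3 := h.norm_w_sq α
  simp only [zero_mul, sub_zero, mul_one, c3] at c1 c2 c4 c5 n1 n2 n3
  set G := ⟪q β, v β⟫_ℝ - ⟪q α, v α⟫_ℝ with hG
  have hβ : ⟪q β, v β⟫_ℝ = ⟪q α, v α⟫_ℝ + G := by rw [hG]; ring
  rw [hβ] at c1 c2 c4 c5
  have hr : ‖q β‖ = ‖q α‖ + G * ⟪q α, v α⟫_ℝ + G ^ 2 / 2 := by linear_combination c1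
  have hw : ‖q β‖ • v β = ‖q α‖ • v α + G • force q v α := by
    rw [sub_eq_iff_eq_add.1 c4]; module
  have hD : q β - q α = G • (‖q α‖ • v α) + (G ^ 2 / 2) • force q v α := by
    rw [hw] at c5
    rw [← sub_eq_zero] at c5 ⊢
    rw [← c5]; module
  constructor
  · rw [hD, norm_add_sq_real, norm_smul, norm_smul (G ^ 2 / 2), inner_smul_left, inner_smul_right,
      mul_pow, mul_pow, n1, n3, real_inner_comm, n2, hr]
    simp only [Real.norm_eq_abs, sq_abs, conj_trivial]
    ring
  · rw [hr] at c2 ⊢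
    linear_combination -c2

end KeplerMotion

/-! ### The countable set of possible elapsed times -/

lemma countable_quadratic (x y : ℝ) : {z : ℝ | z ^ 2 + x * z + y = 0}.Countable := by
  rcases Set.eq_empty_or_nonempty {z : ℝ | z ^ 2 + x * z + y = 0} with h | ⟨z₀, h₀⟩
  · simp [h]
  · refine (Set.toFinite {z₀, -x - z₀}).countable.mono fun z hz => ?_
    simp only [Set.mem_ofPred_eq] at hz h₀
    have : (z - z₀) * (z - (-x - z₀)) = 0 := by linear_combination hz - h₀
    rcases mul_eq_zero.1 this with h | h
    · left; linarith
    · right; exact sub_eq_zero.1 h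

lemma countable_cos_eq {k : ℝ} (hk : k ≠ 0) (y : ℝ) : {x : ℝ | Real.cos (k * x) = y}.Countable := by
  rcases Set.eq_empty_or_nonempty {x : ℝ | Real.cos (k * x) = y} with h | ⟨x₀, h₀⟩
  · simp [h]
  · refine ((Set.countable_range fun n : ℤ => (2 * n * Real.pi + k * x₀) / k).union
      (Set.countable_range fun n : ℤ => (2 * n * Real.pi - k * x₀) / k)).mono fun x hx => ?_
    simp only [Set.mem_ofPred_eq] at hx h₀
    obtain ⟨n, h | h⟩ := Real.cos_eq_cos_iff.1 (h₀.trans hx.symm)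
    · left; refine ⟨n, ?_⟩; simp only [← h]; field_simp
    · right; refine ⟨n, ?_⟩; simp only [← h]; field_simp

lemma countable_cosh_eq {k : ℝ} (hk : k ≠ 0) (y : ℝ) :
    {x : ℝ | Real.cosh (k * x) = y}.Countable := by
  rcases Set.eq_empty_or_nonempty {x : ℝ | Real.cosh (k * x) = y} with h | ⟨x₀, h₀⟩
  · simp [h]
  · refine (Set.toFinite {x₀, -x₀}).countable.mono fun x hx => ?_
    simp only [Set.mem_ofPred_eq] at hx h₀
    have h1 : |k * x| = |k * x₀| :=
      le_antisymm (Real.cosh_le_cosh.1 (hx.trans h₀.symm).le)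
        (Real.cosh_le_cosh.1 (h₀.trans hx.symm).le)
    rw [abs_mul, abs_mul] at h1
    exact abs_eq_abs.1 (mul_left_cancel₀ (abs_ne_zero.2 hk) h1)

/-- For every `K ≠ 0` there are a cosine-like and a sine-like solution of `y'' = -K y`, and the
cosine-like one has countable level sets. -/
lemma exists_trig {K : ℝ} (hK : K ≠ 0) : ∃ C S : ℝ → ℝ, C 0 = 1 ∧ S 0 = 0 ∧
    (∀ x, HasDerivAt C (-(K * S x)) x) ∧ (∀ x, HasDerivAt S (C x) x) ∧
    ∀ y, {x | C x = y}.Countable := by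
  have lin : ∀ k x : ℝ, HasDerivAt (fun x => k * x) k x := fun k x => by
    simpa using (hasDerivAt_id x).const_mul k
  rcases hK.lt_or_gt with h | h
  · obtain ⟨k, hk, hkK⟩ : ∃ k : ℝ, k ≠ 0 ∧ K = -k ^ 2 :=
      ⟨√(-K), (Real.sqrt_pos.2 (by linarith)).ne', by rw [Real.sq_sqrt (by linarith)]; ring⟩
    refine ⟨fun x => Real.cosh (k * x), fun x => Real.sinh (k * x) / k, by simp, by simp,
      fun x => ?_, fun x => ?_, countable_cosh_eq hk⟩
    · refine HasDerivAt.congr_deriv ((lin k x).cosh) ?_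
      rw [hkK]; field_simp
    · refine HasDerivAt.congr_deriv ((lin k x).sinh.div_const k) ?_
      field_simp
  · obtain ⟨k, hk, hkK⟩ : ∃ k : ℝ, k ≠ 0 ∧ K = k ^ 2 :=
      ⟨√K, (Real.sqrt_pos.2 h).ne', by rw [Real.sq_sqrt h.le]⟩
    refine ⟨fun x => Real.cos (k * x), fun x => Real.sin (k * x) / k, by simp, by simp,
      fun x => ?_, fun x => ?_, countable_cos_eq hk⟩
    · refine HasDerivAt.congr_deriv ((lin k x).cos) ?_
      rw [hkK]; field_simp
    · refine HasDerivAt.congr_deriv ((lin k x).sin.div_const k) ?_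
      field_simp

/-- The energy, the chord and the sum of radii determine the elapsed time of a Kepler arc up to
countably many choices. -/
lemma exists_countable_times (E : Type*) [NormedAddCommGroup E] [InnerProductSpace ℝ E]
    (K c R : ℝ) : ∃ T : Set ℝ, T.Countable ∧ ∀ (q v : ℝ → E) (α β : ℝ), KeplerMotion K q v →
      ‖q β - q α‖ = c → ‖q α‖ + ‖q β‖ = R → β - α ∈ T := by
  rcases eq_or_ne K 0 with rfl | hK
  · refine ⟨⋃ m ∈ {m : ℝ | m ^ 2 + (-4 * R) * m + 4 * c ^ 2 = 0},
      (fun G => R * G / 2 - G ^ 3 / 12) '' {G : ℝ | G ^ 2 + 0 * G + -m = 0},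
      (countable_quadratic _ _).biUnion fun m _ => (countable_quadratic _ _).image _, ?_⟩
    intro q v α β h hc hR
    obtain ⟨h1, h2⟩ := h.relations_zero α β
    rw [hc, hR] at h1
    rw [hR] at h2
    refine Set.mem_biUnion (x := (⟪q β, v β⟫_ℝ - ⟪q α, v α⟫_ℝ) ^ 2) ?_ ⟨_, ?_, h2.symm⟩
    · simp only [Set.mem_ofPred_eq]
      linear_combination 4 * h1
    · simp only [Set.mem_ofPred_eq]
      ring
  · obtain ⟨C, S, hC0, hS0, hC, hS, hcount⟩ := exists_trig hK
    -- Squaring the second relation and eliminating `G` and `S θ` leaves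
    -- `(1 - y) * ((2 - K R)² (1 - y) - (2 (1 - y) - K² c²) (1 + y)) = 0` for `y = C θ`.
    let Y : Set ℝ := {1} ∪ {y : ℝ | y ^ 2 + ((K ^ 2 * c ^ 2 - (2 - K * R) ^ 2) / 2) * y
      + ((2 - K * R) ^ 2 + K ^ 2 * c ^ 2 - 2) / 2 = 0}
    have hY : Y.Countable := (Set.countable_singleton _).union (countable_quadratic _ _)
    refine ⟨⋃ y ∈ Y, ⋃ θ ∈ {θ | C θ = y}, (fun G => (θ - G) / K) ''
        {G : ℝ | G ^ 2 + 0 * G + (K * c ^ 2 - 2 * (1 - y) / K) = 0},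
      hY.biUnion fun y _ => (hcount y).biUnion fun θ _ => (countable_quadratic _ _).image _, ?_⟩
    intro q v α β h hc hR
    obtain ⟨h1, h2, h3⟩ := h.relations hC0 hS0 hC hS α β
    rw [hc] at h1
    rw [hR] at h2
    refine Set.mem_biUnion (x := C (KeplerMotion.anomaly K q v α β)) ?_
      (Set.mem_biUnion (x := KeplerMotion.anomaly K q v α β) rfl
        ⟨⟪q β, v β⟫_ℝ - ⟪q α, v α⟫_ℝ, ?_, ?_⟩)
    · generalize KeplerMotion.anomaly K q v α β = θ at *
      generalize ⟪q β, v β⟫_ℝ - ⟪q α, v α⟫_ℝ = G at *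
      have h4 : (1 - C θ) * ((2 - K * R) ^ 2 * (1 - C θ)
          - (2 * (1 - C θ) - K ^ 2 * c ^ 2) * (1 + C θ)) = 0 := by
        linear_combination ((2 - K * R) * (1 - C θ) + K * G * S θ) * h2
          + (1 - C θ ^ 2) * h1 + K * G ^ 2 * h3
      rcases mul_eq_zero.1 h4 with h5 | h5
      · left
        simp only [Set.mem_singleton_iff]
        linarith
      · right
        simp only [Set.mem_ofPred_eq]
        linear_combination h5 / 2
    · simp only [Set.mem_ofPred_eq]
      field_simp
      linear_combination h1
    · simp only [KeplerMotion.anomaly]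
      field_simp
      ring

lemma eq_of_continuousOn_countable {J T : Set ℝ} (hJ : J.OrdConnected) {g : ℝ → ℝ}
    (hg : ContinuousOn g J) (hT : T.Countable) (hgT : ∀ s ∈ J, g s ∈ T) :
    ∀ s₁ ∈ J, ∀ s₂ ∈ J, g s₁ = g s₂ := by
  have himg : (g '' J).OrdConnected := (hJ.isPreconnected.image g hg).ordConnected
  have key : ∀ s₁ ∈ J, ∀ s₂ ∈ J, ¬ g s₁ < g s₂ := by
    intro s₁ h₁ s₂ h₂ hlt
    have hsub : Set.Icc (g s₁) (g s₂) ⊆ T :=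
      (himg.out (Set.mem_image_of_mem g h₁) (Set.mem_image_of_mem g h₂)).trans
        (Set.image_subset_iff.2 hgT)
    exact (Cardinal.Real.Icc_countable_iff.1 (hT.mono hsub)).not_gt hlt
  intro s₁ h₁ s₂ h₂
  exact le_antisymm (not_lt.1 (key s₂ h₂ s₁ h₁)) (not_lt.1 (key s₁ h₁ s₂ h₂))


/-- Lambert's theorem, smooth-family version: For a C² one-parameter
family of Keplerian arcs `s ↦ (a(s), b(s), q(s, ·))` in `ℝ^d ∖ {0}`, if the chord
length `‖B(s) − A(s)‖`, the sum of the radii `‖A(s)‖ + ‖B(s)‖` and the energy `H(s)`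
are constant on `J`, then the elapsed time `b(s) − a(s)` is constant on `J`. -/
theorem lambert_theorem_smooth_family
    (d : ℕ) (hd : 1 ≤ d)
    (J : Set ℝ) (hJ : IsOpen J) (hJ' : J.OrdConnected)
    (a b : ℝ → ℝ)
    (ha : ∀ s ∈ J, DifferentiableAt ℝ a s)
    (hb : ∀ s ∈ J, DifferentiableAt ℝ b s)
    (hab : ∀ s ∈ J, a s < b s)
    (q : ℝ → ℝ → EuclideanSpace ℝ (Fin d))
    (hsm : ContDiff ℝ 2 (Function.uncurry q))
    (hne : ∀ s ∈ J, ∀ t : ℝ, q s t ≠ 0)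
    (hN : ∀ s ∈ J, ∀ t : ℝ,
      deriv (deriv (q s)) t = -((‖q s t‖ ^ 3)⁻¹ • q s t))
    (H : ℝ → ℝ)
    (hH : ∀ s ∈ J, ∀ t : ℝ,
      H s = (1 / 2) * ‖deriv (q s) t‖ ^ 2 - 1 / ‖q s t‖)
    (hchord : ∀ s₁ ∈ J, ∀ s₂ ∈ J,
      ‖q s₁ (b s₁) - q s₁ (a s₁)‖ = ‖q s₂ (b s₂) - q s₂ (a s₂)‖)
    (hsum : ∀ s₁ ∈ J, ∀ s₂ ∈ J,
      ‖q s₁ (a s₁)‖ + ‖q s₁ (b s₁)‖ = ‖q s₂ (a s₂)‖ + ‖q s₂ (b s₂)‖)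
    (hen : ∀ s₁ ∈ J, ∀ s₂ ∈ J, H s₁ = H s₂) :
    ∀ s₁ ∈ J, ∀ s₂ ∈ J, b s₁ - a s₁ = b s₂ - a s₂ := by
  intro s₁ h₁
  obtain ⟨T, hT, hmem⟩ := exists_countable_times (EuclideanSpace ℝ (Fin d)) (-2 * H s₁)
    ‖q s₁ (b s₁) - q s₁ (a s₁)‖ (‖q s₁ (a s₁)‖ + ‖q s₁ (b s₁)‖)
  have hg : ContinuousOn (fun s => b s - a s) J := fun s hs =>
    ((hb s hs).continuousAt.sub (ha s hs).continuousAt).continuousWithinAt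
  refine eq_of_continuousOn_countable hJ' hg hT (fun s hs => ?_) s₁ h₁
  refine hmem (q s) (deriv (q s)) (a s) (b s) ?_ (hchord s hs s₁ h₁) (hsum s hs s₁ h₁)
  have hq : ContDiff ℝ 2 (q s) := hsm.comp (contDiff_const.prodMk contDiff_id)
  have hq' : ContDiff ℝ 1 (deriv (q s)) :=
    ((contDiff_succ_iff_deriv (n := 1)).1 (by simpa [one_add_one_eq_two] using hq)).2.2
  refine ⟨hne s hs, fun t => (hq.differentiable (by norm_num) t).hasDerivAt, fun t => ?_,
    fun t => ?_⟩
  · rw [← hN s hs t]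
    exact (hq'.differentiable (by norm_num) t).hasDerivAt
  · have h1 := hH s hs t
    rw [hen s hs s₁ h₁] at h1
    linear_combination -2 * h1
end

section
/- Let A = (x_A, y_A) and B = (x_B, y_B) be two nonzero points of ℝ² that do not lie on the same ray from the origin, i.e. A/‖A‖ ≠ B/‖B‖. Let H ∈ ℝ satisfy H > H_min, where H_min = −2/(‖A − B‖ + ‖A‖ + ‖B‖). Then there exist exactly two triples (α, β, γ) ∈ ℝ × ℝ × (0, ∞) satisfying simultaneously the two unifocal equations ‖A‖ = α·x_A + β·y_A + γ and ‖B‖ = α·x_B + β·y_B + γ together with the energy relation α² + β² − 1 = 2·H·γ. Equivalently, there are exactly two Keplerian branches of energy H passing through A and B. -/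
/-!
Write `a = ‖A‖`, `b = ‖B‖`, `c = ‖A - B‖`, `k = ⟨A, B⟩`, `D = det (A, B)`. The two unifocal
equations cut out a line in `(α, β, γ)`-space, parametrised by the component
`t = α (yA - yB) + β (xB - xA)` of `(α, β)` orthogonal to `A - B`. On this line the energy
relation reads `(t - H D)² = Δ` with `Δ = (a b - k) (H² (a b + k) + 2 + 2 H (a + b))`
(`branch_iff`).

Distinct rays give `a b - k > 0`, and with `p = a + b + c`, `q = a + b - c` the second factor
of `Δ` is `(p H + 2) (q H + 2) / 2`, which is positive as soon as `H > -2 / p`, because `0 ≤ q < p`.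
So there are exactly two solutions `t = H D ± √Δ`. The corresponding values of `γ` have product
`(a b - k)² / c²` and sum `2 (a b - k) (a + b + H (a b + k)) / c²`, both positive,
so both are positive (`gamma_pos`).
-/

/-- The unifocal equations together with the energy relation, parametrised along the line
cut out by the two linear equations: here `d = ‖A - B‖²` and `w = t - H D` is the shifted line parameter. -/
lemma branch_iff {xA yA xB yB a b d D k H : ℝ}
    (ha : a ^ 2 = xA ^ 2 + yA ^ 2) (hb : b ^ 2 = xB ^ 2 + yB ^ 2)
    (hd : d = (xA - xB) ^ 2 + (yA - yB) ^ 2) (hd0 : 0 < d)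
    (hD : D = xA * yB - xB * yA) (hk : k = xA * xB + yA * yB) (α β γ : ℝ) :
    (a = α * xA + β * yA + γ ∧ b = α * xB + β * yB + γ ∧ α ^ 2 + β ^ 2 - 1 = 2 * H * γ) ↔
    ∃ w : ℝ, w ^ 2 = (a * b - k) * (H ^ 2 * (a * b + k) + 2 + 2 * H * (a + b)) ∧
      α = ((a - b) * (xA - xB) + (H * D + w) * (yA - yB)) / d ∧
      β = ((a - b) * (yA - yB) + (H * D + w) * (xB - xA)) / d ∧
      γ = ((a * b - k) * (a + b) + (H * D + w) * D) / d := by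
  have hdk : d = a ^ 2 + b ^ 2 - 2 * k := by rw [ha, hb, hd, hk]; ring
  have hDk : D ^ 2 = a ^ 2 * b ^ 2 - k ^ 2 := by rw [ha, hb, hD, hk]; ring
  have hne : d ≠ 0 := hd0.ne'
  constructor
  · rintro ⟨h1, h2, h3⟩
    obtain ⟨w, hw⟩ : ∃ w, w = α * (yA - yB) + β * (xB - xA) - H * D := ⟨_, rfl⟩
    have hab : a - b = α * (xA - xB) + β * (yA - yB) := by linear_combination h1 - h2
    have ht : H * D + w = α * (yA - yB) + β * (xB - xA) := by rw [hw]; ring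
    have hα : α * d = (a - b) * (xA - xB) + (H * D + w) * (yA - yB) := by
      rw [ht, hab, hd]; ring
    have hβ : β * d = (a - b) * (yA - yB) + (H * D + w) * (xB - xA) := by
      rw [ht, hab, hd]; ring
    have hγ : γ * d = (a * b - k) * (a + b) + (H * D + w) * D := by
      have e1 : γ = a - α * xA - β * yA := by linear_combination -h1
      have e2 : (a - b) * ((xA - xB) * xA + (yA - yB) * yA) = (a - b) * (a ^ 2 - k) := by
        rw [ha, hk]; ring
      have e3 : γ * d = a * d - (α * d) * xA - (β * d) * yA := by rw [e1]; ring
      rw [e3, hα, hβ]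
      linear_combination a * hdk - e2 - (H * D + w) * hD
    have hN : (α ^ 2 + β ^ 2) * d = (a - b) ^ 2 + (H * D + w) ^ 2 := by
      rw [ht, hab, hd]; ring
    refine ⟨w, ?_, ?_, ?_, ?_⟩
    · linear_combination -hN + d * h3 + 2 * H * hγ + hdk + H ^ 2 * hDk
    · rw [eq_div_iff hne, hα]
    · rw [eq_div_iff hne, hβ]
    · rw [eq_div_iff hne, hγ]
  · rintro ⟨w, hw, hα, hβ, hγ⟩
    rw [eq_div_iff hne] at hα hβ hγ
    refine ⟨?_, ?_, ?_⟩
    · apply mul_right_cancel₀ hne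
      linear_combination (-xA) * hα - yA * hβ - hγ + a * hdk - (H * D + w) * hD +
        (a - b) * ha + (b - a) * hk
    · apply mul_right_cancel₀ hne
      linear_combination (-xB) * hα - yB * hβ - hγ + b * hdk - (H * D + w) * hD +
        (b - a) * hb + (a - b) * hk
    · apply mul_right_cancel₀ hne
      have hN : (α ^ 2 + β ^ 2) * d = (a - b) ^ 2 + (H * D + w) ^ 2 := by
        apply mul_right_cancel₀ hne
        have : (α ^ 2 + β ^ 2) * d * d = (α * d) ^ 2 + (β * d) ^ 2 := by ring
        rw [this, hα, hβ, hd]; ring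
      linear_combination hN - 2 * H * hγ + hw - hdk - H ^ 2 * hDk

/-- Both roots give a positive `γ`: with `X = (a b - k) (a + b) + H D²` the numerators are
`X ± w D`, where `X > 0` and `X² - w² D² = (a b - k)² c² > 0`. -/
lemma gamma_pos {a b c D k H w : ℝ} (hm : 0 < a * b - k)
    (hDk : D ^ 2 = a ^ 2 * b ^ 2 - k ^ 2) (hc : 0 < c)
    (hck : c ^ 2 = a ^ 2 + b ^ 2 - 2 * k)
    (hE : 0 < a + b + H * (a * b + k))
    (hw : w ^ 2 = (a * b - k) * (H ^ 2 * (a * b + k) + 2 + 2 * H * (a + b))) :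
    0 < (a * b - k) * (a + b) + (H * D + w) * D := by
  have hX : (a * b - k) * (a + b) + H * D ^ 2 = (a * b - k) * (a + b + H * (a * b + k)) := by
    rw [hDk]; ring
  have hlt : (w * D) ^ 2 < ((a * b - k) * (a + b + H * (a * b + k))) ^ 2 := by
    have h0 : 0 < ((a * b - k) * c) ^ 2 := by positivity
    have h1 : ((a * b - k) * (a + b + H * (a * b + k))) ^ 2 - (w * D) ^ 2
        = ((a * b - k) * c) ^ 2 := by
      rw [mul_pow w, mul_pow _ c, hw, hDk, hck]; ring
    linarith
  have h2 := (abs_lt.1 (abs_lt_of_sq_lt_sq hlt (by positivity))).1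
  linarith

/-- If `A` and `B` are nonzero points of the plane not on the same ray
from the origin, and `H > H_min = −2/(‖A − B‖ + ‖A‖ + ‖B‖)`, then there are exactly
two triples `(α, β, γ)` with `γ > 0` satisfying the two unifocal equations at `A` and
`B` together with the energy relation `α² + β² − 1 = 2·H·γ`: exactly two Keplerian
branches of energy `H` pass through `A` and `B`. -/
theorem exactly_two_branches_with_given_energy
    (xA yA xB yB : ℝ)
    (hA : (xA, yA) ≠ (0, 0)) (hB : (xB, yB) ≠ (0, 0))
    (hray : (xA / Real.sqrt (xA ^ 2 + yA ^ 2), yA / Real.sqrt (xA ^ 2 + yA ^ 2)) ≠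
            (xB / Real.sqrt (xB ^ 2 + yB ^ 2), yB / Real.sqrt (xB ^ 2 + yB ^ 2)))
    (H : ℝ)
    (hH : H > -2 / (Real.sqrt ((xA - xB) ^ 2 + (yA - yB) ^ 2) +
        Real.sqrt (xA ^ 2 + yA ^ 2) + Real.sqrt (xB ^ 2 + yB ^ 2))) :
    ∃ p₁ p₂ : ℝ × ℝ × ℝ, p₁ ≠ p₂ ∧
      ∀ p : ℝ × ℝ × ℝ,
        (0 < p.2.2 ∧
          Real.sqrt (xA ^ 2 + yA ^ 2) = p.1 * xA + p.2.1 * yA + p.2.2 ∧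
          Real.sqrt (xB ^ 2 + yB ^ 2) = p.1 * xB + p.2.1 * yB + p.2.2 ∧
          p.1 ^ 2 + p.2.1 ^ 2 - 1 = 2 * H * p.2.2) ↔ (p = p₁ ∨ p = p₂) := by
  set a := Real.sqrt (xA ^ 2 + yA ^ 2) with ha_def
  set b := Real.sqrt (xB ^ 2 + yB ^ 2) with hb_def
  set c := Real.sqrt ((xA - xB) ^ 2 + (yA - yB) ^ 2) with hc_def
  have ha : a ^ 2 = xA ^ 2 + yA ^ 2 := Real.sq_sqrt (by positivity)
  have hb : b ^ 2 = xB ^ 2 + yB ^ 2 := Real.sq_sqrt (by positivity)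
  have hc : c ^ 2 = (xA - xB) ^ 2 + (yA - yB) ^ 2 := Real.sq_sqrt (by positivity)
  have pos_of : ∀ x y : ℝ, (x, y) ≠ (0, 0) → 0 < Real.sqrt (x ^ 2 + y ^ 2) := by
    intro x y h
    apply Real.sqrt_pos.2
    by_contra! hle
    apply h
    rw [show x = 0 by nlinarith [sq_nonneg x, sq_nonneg y],
      show y = 0 by nlinarith [sq_nonneg x, sq_nonneg y]]
  have ha0 : 0 < a := pos_of _ _ hA
  have hb0 : 0 < b := pos_of _ _ hB
  have hc0' : 0 ≤ c := Real.sqrt_nonneg _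
  clear_value a b c
  obtain ⟨k, hk⟩ : ∃ k, k = xA * xB + yA * yB := ⟨_, rfl⟩
  obtain ⟨D, hD⟩ : ∃ D, D = xA * yB - xB * yA := ⟨_, rfl⟩
  have hck : c ^ 2 = a ^ 2 + b ^ 2 - 2 * k := by rw [ha, hb, hc, hk]; ring
  have hDk : D ^ 2 = a ^ 2 * b ^ 2 - k ^ 2 := by rw [ha, hb, hD, hk]; ring
  have hab : 0 < a * b := mul_pos ha0 hb0
  have hm : 0 < a * b - k := by
    by_contra! hle
    apply hray
    have hs : (xA * b - xB * a) ^ 2 + (yA * b - yB * a) ^ 2 = 2 * (a * b) * (a * b - k) := by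
      linear_combination (-a ^ 2) * hb - b ^ 2 * ha + 2 * a * b * hk
    have hle' : 2 * (a * b) * (a * b - k) ≤ 0 :=
      mul_nonpos_of_nonneg_of_nonpos (by positivity) hle
    have h1 : xA * b - xB * a = 0 := by
      nlinarith [sq_nonneg (xA * b - xB * a), sq_nonneg (yA * b - yB * a)]
    have h2 : yA * b - yB * a = 0 := by
      nlinarith [sq_nonneg (xA * b - xB * a), sq_nonneg (yA * b - yB * a)]
    rw [Prod.mk.injEq, div_eq_div_iff ha0.ne' hb0.ne', div_eq_div_iff ha0.ne' hb0.ne']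
    constructor <;> linarith
  -- `k ≥ -a b` is Cauchy-Schwarz, here read off from `D² = (a b - k) (a b + k)`.
  have hn : 0 ≤ a * b + k := by
    by_contra! hlt
    nlinarith [mul_neg_of_pos_of_neg hm hlt, sq_nonneg D]
  have hc0 : 0 < c := by
    refine lt_of_le_of_ne hc0' fun h => ?_
    rw [← h] at hck
    nlinarith [sq_nonneg (a - b)]
  have hd0 : 0 < c ^ 2 := by positivity
  have hpq : (a + b + c) * (a + b - c) = 2 * (a * b + k) := by linear_combination -hck
  have hq : 0 ≤ a + b - c := by
    by_contra! hlt
    have := mul_neg_of_pos_of_neg (by positivity : 0 < a + b + c) hlt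
    linarith
  have hp : 0 < (a + b + c) * H + 2 := by
    have h := (div_lt_iff₀ (by positivity : 0 < c + a + b)).1 hH
    linarith
  have hqH : 0 < (a + b - c) * H + 2 := by
    rcases le_total 0 H with h | h
    · linarith [mul_nonneg hq h]
    · linarith [mul_nonpos_of_nonneg_of_nonpos hc0' h]
  have hE : 0 < a + b + H * (a * b + k) := by
    have := mul_nonneg hq hp.le
    have e : H * ((a + b + c) * (a + b - c)) = H * (2 * (a * b + k)) := by rw [hpq]
    linarith
  have hΔ : 0 < (a * b - k) * (H ^ 2 * (a * b + k) + 2 + 2 * H * (a + b)) := by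
    apply mul_pos hm
    have := mul_pos hp hqH
    have e : H ^ 2 * ((a + b + c) * (a + b - c)) = H ^ 2 * (2 * (a * b + k)) := by rw [hpq]
    linarith
  obtain ⟨S, hS⟩ : ∃ S, S = Real.sqrt ((a * b - k) *
    (H ^ 2 * (a * b + k) + 2 + 2 * H * (a + b))) := ⟨_, rfl⟩
  have hS0 : 0 < S := by rw [hS]; exact Real.sqrt_pos.2 hΔ
  have hS2 : S ^ 2 = (a * b - k) * (H ^ 2 * (a * b + k) + 2 + 2 * H * (a + b)) :=
    by rw [hS]; exact Real.sq_sqrt hΔ.le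
  let P : ℝ → ℝ × ℝ × ℝ := fun w =>
    (((a - b) * (xA - xB) + (H * D + w) * (yA - yB)) / c ^ 2,
      ((a - b) * (yA - yB) + (H * D + w) * (xB - xA)) / c ^ 2,
      ((a * b - k) * (a + b) + (H * D + w) * D) / c ^ 2)
  refine ⟨P S, P (-S), ?_, ?_⟩
  · intro h
    simp only [P, Prod.mk.injEq, div_left_inj' hd0.ne'] at h
    -- The parameter is recovered from `(α, β)` by pairing with the normal to `A - B`.
    have : S * c ^ 2 = 0 := by
      rw [hc]
      linear_combination (yA - yB) / 2 * h.1 + (xB - xA) / 2 * h.2.1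
    exact (mul_pos hS0 hd0).ne' this
  · rintro ⟨α, β, γ⟩
    have key := branch_iff (H := H) ha hb hc hd0 hD hk α β γ
    constructor
    · rintro ⟨-, h⟩
      obtain ⟨w, hw, h1, h2, h3⟩ := key.1 h
      have hwP : (α, β, γ) = P w := by rw [h1, h2, h3]
      rw [hwP]
      rcases sq_eq_sq_iff_eq_or_eq_neg.1 (hw.trans hS2.symm) with rfl | rfl
      · exact Or.inl rfl
      · exact Or.inr rfl
    · intro h
      obtain ⟨w, hw, hP⟩ : ∃ w, w ^ 2 = (a * b - k) *
          (H ^ 2 * (a * b + k) + 2 + 2 * H * (a + b)) ∧ (α, β, γ) = P w := by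
        rcases h with h | h
        · exact ⟨S, hS2, h⟩
        · exact ⟨-S, by rw [neg_sq, hS2], h⟩
      simp only [P, Prod.mk.injEq] at hP
      refine ⟨?_, key.2 ⟨w, hw, hP⟩⟩
      simp only [hP.2.2]
      exact div_pos (gamma_pos hm hDk hc0 hck hE hw) hd0
end

section
/- Let M ∈ ℝ, N > 0, T > 0, and let q : [0, T] → ℝ² ∖ {0} be a twice-differentiable solution of Newton's system q'' = −q/‖q‖³ whose image lies on the vertical Keplerian branch, i.e. ‖q(t)‖ = M·q₂(t) + N for all t ∈ [0, T]; assume the endpoints are distinct and have the same ordinate: q(0) ≠ q(T) and q₂(0) = q₂(T). Fix φ ∈ (0, π) and let Ψ(x, y) = (x + M·y·cos φ + N·cos φ, y·sin φ). Then there exists a twice-differentiable solution q̃ : [0, T] → ℝ² ∖ {0} of Newton's system such that q̃(0) = Ψ(q(0)), q̃(T) = Ψ(q(T)), the image of q̃ lies on the image branch (‖q̃(t)‖ = q̃₁(t)·cos φ + M·q̃₂(t)·sin φ + N·sin² φ for all t), and q̃ has the same energy as q. In particular the elapsed time T, the chord length, the sum of the radii of the endpoints, and the energy of the arc are all unchanged.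 -/
/-!
Write `r = M y + N` for the radius along the given arc and `c = cos φ`, `s = sin φ`.
Differentiating `x² + y² = (M y + N)²` twice along the motion shows that the (constant) angular
momentum `C = x ẏ - y ẋ` satisfies `C² = N`, and solving the linear system for the velocity gives
the hodograph `ẋ = (C / N) (M - y / r)`, `ẏ = (C / N) (x / r)` (`velocity_of_branch`).

The image point `Ψ(x, y) = (x + c r, s y)` is at distance `ρ = r + c x` from the origin. The image
curve turns out to be a Keplerian motion for the time `τ` that shares the regularised time
`dt / r = dτ / ρ` of the given motion, that is, `dτ / dt = 1 + c x / r`. By the hodograph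
`x / r = (N / C) ẏ`, hence `τ(t) = t + c (N / C) (y(t) - y(0))`, and the equality of the two end
ordinates is exactly what makes `τ(T) = T`. The transported arc is `Ψ ∘ q ∘ τ⁻¹`. Both energies
equal `(M² - 1) / (2 N)`.

The hypotheses control the given arc on `[0, T]` only, while two-sided second derivatives are wanted
at the endpoints; `exists_extension` and `exists_extension_two` therefore replace functions by
`C¹` or `C²` extensions off `[0, T]`, and `exists_inverse_time` uses this to build `τ⁻¹` on all of `ℝ`.
-/

open Set Filter Topology

/-- If the derivative of `f` on `[0, T]` is the restriction of a continuous `V : ℝ → ℝ`, then `f`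
agrees on `[0, T]` with the primitive of `V`. -/
lemma exists_extension {T : ℝ} {f V : ℝ → ℝ} (hV : Continuous V)
    (hf : ∀ t ∈ Icc 0 T, HasDerivAt f (V t) t) :
    ∃ F : ℝ → ℝ, (∀ t, HasDerivAt F (V t) t) ∧ ∀ t ∈ Icc 0 T, F t = f t := by
  have hF : ∀ t, HasDerivAt (fun t => f 0 + ∫ u in (0 : ℝ)..t, V u) (V t) t := fun t =>
    (intervalIntegral.integral_hasDerivAt_right (hV.intervalIntegrable _ _)
      (hV.stronglyMeasurableAtFilter _ _) hV.continuousAt).const_add _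
  refine ⟨_, hF, ?_⟩
  refine eq_of_has_deriv_right_eq (f' := V)
    (fun t _ => (hF t).hasDerivWithinAt)
    (fun t ht => (hf t (Ico_subset_Icc_self ht)).hasDerivWithinAt)
    (fun t _ => (hF t).continuousAt.continuousWithinAt)
    (fun t ht => (hf t ht).continuousAt.continuousWithinAt) ?_
  simp

/-- Second-order version of `exists_extension`: the values and the first two derivatives of `f` on
`[0, T]`, endpoints included, are those of a function that is `C²` on `ℝ`. -/
lemma exists_extension_two {T : ℝ} (hT : 0 < T) {f v a : ℝ → ℝ}
    (hf : ∀ t ∈ Icc 0 T, HasDerivAt f (v t) t) (hv : ∀ t ∈ Icc 0 T, HasDerivAt v (a t) t)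
    (ha : ContinuousOn a (Icc 0 T)) :
    ∃ F : ℝ → ℝ, (∀ t ∈ Icc 0 T, F t = f t) ∧ (∀ t ∈ Icc 0 T, deriv F t = v t) ∧
      (∀ t ∈ Icc 0 T, DifferentiableAt ℝ F t ∧ DifferentiableAt ℝ (deriv F) t) ∧
      ∀ t ∈ Icc 0 T, deriv (deriv F) t = a t := by
  have hA : Continuous (IccExtend hT.le ((Icc 0 T).domRestrict a)) :=
    (continuousOn_iff_continuous_domRestrict.1 ha).Icc_extend'
  obtain ⟨V, hV, hVv⟩ := exists_extension (T := T) (f := v) hA fun t ht => by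
    simpa [IccExtend_of_mem hT.le _ ht] using hv t ht
  obtain ⟨F, hF, hFf⟩ := exists_extension (T := T) (f := f) (V := V)
    (continuous_iff_continuousAt.2 fun t => (hV t).continuousAt) fun t ht => by
      simpa [hVv t ht] using hf t ht
  have hd : deriv F = V := funext fun t => (hF t).deriv
  refine ⟨F, hFf, fun t ht => by rw [hd, hVv t ht], fun t _ => ⟨(hF t).differentiableAt, ?_⟩,
    fun t ht => ?_⟩
  · rw [hd]; exact (hV t).differentiableAt
  · rw [hd, (hV t).deriv, IccExtend_of_mem hT.le _ ht, domRestrict_apply]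

/-- A time change `τ` of `[0, T]` onto itself with derivative `g ≥ m > 0` has an inverse that is
differentiable, in the two-sided sense, up to the endpoints. -/
lemma exists_inverse_time {T m : ℝ} (hT : 0 < T) (hm : 0 < m) {τ g : ℝ → ℝ}
    (hτ : ∀ t ∈ Icc 0 T, HasDerivAt τ (g t) t) (hg : ContinuousOn g (Icc 0 T))
    (hgm : ∀ t ∈ Icc 0 T, m ≤ g t) (h0 : τ 0 = 0) (h1 : τ T = T) :
    ∃ σ : ℝ → ℝ, σ 0 = 0 ∧ σ T = T ∧ (∀ t ∈ Icc 0 T, σ t ∈ Icc 0 T) ∧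
      ∀ t ∈ Icc 0 T, HasDerivAt σ (g (σ t))⁻¹ t := by
  have m0 : (0 : ℝ) ∈ Icc 0 T := ⟨le_rfl, hT.le⟩
  have mT : T ∈ Icc 0 T := ⟨hT.le, le_rfl⟩
  set G := IccExtend hT.le ((Icc 0 T).domRestrict g) with hGdef
  have hG : Continuous G := (continuousOn_iff_continuous_domRestrict.1 hg).Icc_extend'
  have hGg : ∀ t ∈ Icc 0 T, G t = g t := fun t ht => by
    rw [hGdef, IccExtend_of_mem hT.le _ ht, domRestrict_apply]
  have hGm : ∀ t, m ≤ G t := fun t => hgm _ (projIcc 0 T hT.le t).2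
  obtain ⟨F, hF, hFτ⟩ := exists_extension (T := T) (f := τ) hG fun t ht => by
    rw [hGg t ht]; exact hτ t ht
  have hmono : StrictMono F := strictMono_of_deriv_pos fun t => by
    rw [(hF t).deriv]; exact hm.trans_le (hGm t)
  -- `F` grows at least linearly, hence is onto
  have hmono' : Monotone fun t => F t - m * t := by
    have hd : ∀ t, HasDerivAt (fun t => F t - m * t) (G t - m * 1) t := fun t =>
      (hF t).sub ((hasDerivAt_id t).const_mul m)
    refine monotone_of_deriv_nonneg (fun t => (hd t).differentiableAt) fun t => ?_
    rw [(hd t).deriv]; linarith [hGm t]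
  have hF0 : F 0 = 0 := (hFτ 0 m0).trans h0
  have hFT : F T = T := (hFτ T mT).trans h1
  have hsurj : Function.Surjective F := by
    refine Continuous.surjective (continuous_iff_continuousAt.2 fun t => (hF t).continuousAt)
      ?_ ?_
    · refine tendsto_atTop_mono' _ ?_ (tendsto_id.const_mul_atTop hm)
      filter_upwards [eventually_ge_atTop 0] with t ht
      have := hmono' ht
      simp only [hF0] at this
      simp only [id]; linarith
    · refine tendsto_atBot_mono' _ ?_ (tendsto_id.const_mul_atBot hm)
      filter_upwards [eventually_le_atBot 0] with t ht
      have := hmono' ht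
      simp only [hF0] at this
      simp only [id]; linarith
  let e := hmono.orderIsoOfSurjective F hsurj
  have he : ∀ t, F (e.symm t) = t := fun t => e.apply_symm_apply t
  have he0 : e.symm 0 = 0 := hmono.injective (by rw [he, hF0])
  have heT : e.symm T = T := hmono.injective (by rw [he, hFT])
  have hmem : ∀ t ∈ Icc 0 T, e.symm t ∈ Icc 0 T := fun t ht =>
    ⟨he0 ▸ e.symm.monotone ht.1, heT ▸ e.symm.monotone ht.2⟩
  refine ⟨e.symm, he0, heT, hmem, fun t ht => ?_⟩
  rw [← hGg _ (hmem t ht)]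
  exact HasDerivAt.of_local_left_inverse e.symm.continuous.continuousAt (hF _)
    (hm.trans_le (hGm _)).ne' (Eventually.of_forall he)

lemma deriv_eq_zero_of_eqOn_zero {T t d : ℝ} (hT : 0 < T) {g : ℝ → ℝ}
    (h : ∀ t ∈ Icc 0 T, g t = 0) (ht : t ∈ Icc 0 T) (hg : HasDerivAt g d t) : d = 0 :=
  (uniqueDiffOn_Icc hT t ht).eq_deriv _ hg.hasDerivWithinAt
    ((hasDerivWithinAt_const t _ (0 : ℝ)).congr h (h t ht))

/-- The hodograph: a Keplerian motion on the branch `r = M y + N` has an angular momentum `C` with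
`C² = N`, and its velocity is a function of its position and `C`. -/
lemma velocity_of_branch {M N T : ℝ} (hN : 0 < N) (hT : 0 < T) {x y u v : ℝ → ℝ}
    (hx : ∀ t ∈ Icc 0 T, HasDerivAt x (u t) t) (hy : ∀ t ∈ Icc 0 T, HasDerivAt y (v t) t)
    (hu : ∀ t ∈ Icc 0 T, HasDerivAt u (-x t / (M * y t + N) ^ 3) t)
    (hv : ∀ t ∈ Icc 0 T, HasDerivAt v (-y t / (M * y t + N) ^ 3) t)
    (hr : ∀ t ∈ Icc 0 T, 0 < M * y t + N)
    (hb : ∀ t ∈ Icc 0 T, x t ^ 2 + y t ^ 2 = (M * y t + N) ^ 2) :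
    ∃ C : ℝ, C ^ 2 = N ∧
      (∀ t ∈ Icc 0 T, u t = C / N * (M - y t / (M * y t + N))) ∧
      ∀ t ∈ Icc 0 T, v t = C / N * (x t / (M * y t + N)) := by
  have m0 : (0 : ℝ) ∈ Icc 0 T := ⟨le_rfl, hT.le⟩
  have hC : ∀ t ∈ Icc 0 T, x t * v t - y t * u t = x 0 * v 0 - y 0 * u 0 := by
    have hd : ∀ t ∈ Icc 0 T, HasDerivAt (fun t => x t * v t - y t * u t) 0 t := fun t ht => by
      refine (((hx t ht).mul (hv t ht)).sub ((hy t ht).mul (hu t ht))).congr_deriv ?_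
      ring
    exact constant_of_has_deriv_right_zero
      (fun t ht => (hd t ht).continuousAt.continuousWithinAt)
      fun t ht => (hd t (Ico_subset_Icc_self ht)).hasDerivWithinAt
  have h1 : ∀ t ∈ Icc 0 T, x t * u t + y t * v t - (M * y t + N) * (M * v t) = 0 := by
    intro t ht
    have hd := (((hx t ht).pow 2).add ((hy t ht).pow 2)).sub
      ((((hy t ht).const_mul M).add_const N).pow 2)
    have := deriv_eq_zero_of_eqOn_zero hT (fun t ht => by
      simpa [sub_eq_zero] using hb t ht) ht hd
    simp at this
    linarith
  have h2 : ∀ t ∈ Icc 0 T, (M * y t + N) ^ 2 * (u t ^ 2 + v t ^ 2 - M ^ 2 * v t ^ 2) = N := by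
    intro t ht
    have hd := (((hx t ht).mul (hu t ht)).add ((hy t ht).mul (hv t ht))).sub
      ((((hy t ht).const_mul M).add_const N).mul ((hv t ht).const_mul M))
    have := deriv_eq_zero_of_eqOn_zero hT (fun t ht => by simpa using h1 t ht) ht hd
    have hr0 := (hr t ht).ne'
    have hbt := hb t ht
    field_simp at this
    refine mul_right_cancel₀ hr0 ?_
    linear_combination this + hbt
  refine ⟨x 0 * v 0 - y 0 * u 0, ?_, fun t ht => ?_, fun t ht => ?_⟩
  · linear_combination h2 0 m0 + (u 0 ^ 2 + v 0 ^ 2) * hb 0 m0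
      - (x 0 * u 0 + y 0 * v 0 + (M * y 0 + N) * (M * v 0)) * h1 0 m0
  · rw [← hC t ht]
    have hr0 := (hr t ht).ne'
    have hbt := hb t ht
    have h1t := h1 t ht
    generalize hρ : M * y t + N = r at hr0 hbt h1t ⊢
    field_simp
    linear_combination x t * h1t - u t * hbt + u t * r * hρ
  · rw [← hC t ht]
    have hr0 := (hr t ht).ne'
    have hbt := hb t ht
    have h1t := h1 t ht
    generalize hρ : M * y t + N = r at hr0 hbt h1t ⊢
    field_simp
    linear_combination y t * h1t - v t * hbt + v t * r * hρ

/-- Given a Keplerian arc `q = (x, y)` on `[0, T]` lying on the vertical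
branch `r = M·y + N`, with distinct endpoints of equal ordinate, and given
`φ ∈ (0, π)`, there exists a Keplerian arc `q̃ = (x̃, ỹ)` on `[0, T]` whose endpoints
are the images of those of `q` by the affine map
`Ψ(x, y) = (x + M·y·cos φ + N·cos φ, y·sin φ)`, which lies on the image branch
`r = x·cos φ + M·y·sin φ + N·sin² φ`, and which has the same energy as `q`. -/
theorem transported_arc_exists
    (M N T : ℝ) (hN : 0 < N) (hT : 0 < T)
    (x y : ℝ → ℝ)
    (hx : ∀ t ∈ Set.Icc 0 T, DifferentiableAt ℝ x t ∧ DifferentiableAt ℝ (deriv x) t)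
    (hy : ∀ t ∈ Set.Icc 0 T, DifferentiableAt ℝ y t ∧ DifferentiableAt ℝ (deriv y) t)
    (hne : ∀ t ∈ Set.Icc 0 T, (x t, y t) ≠ (0, 0))
    (hnx : ∀ t ∈ Set.Icc 0 T,
      deriv (deriv x) t = - x t / (Real.sqrt (x t ^ 2 + y t ^ 2)) ^ 3)
    (hny : ∀ t ∈ Set.Icc 0 T,
      deriv (deriv y) t = - y t / (Real.sqrt (x t ^ 2 + y t ^ 2)) ^ 3)
    (hbranch : ∀ t ∈ Set.Icc 0 T, Real.sqrt (x t ^ 2 + y t ^ 2) = M * y t + N)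
    (hends : (x 0, y 0) ≠ (x T, y T)) (hord : y 0 = y T)
    (φ : ℝ) (hφ : φ ∈ Set.Ioo 0 Real.pi) :
    ∃ x' y' : ℝ → ℝ,
      (∀ t ∈ Set.Icc 0 T,
        DifferentiableAt ℝ x' t ∧ DifferentiableAt ℝ (deriv x') t) ∧
      (∀ t ∈ Set.Icc 0 T,
        DifferentiableAt ℝ y' t ∧ DifferentiableAt ℝ (deriv y') t) ∧
      (∀ t ∈ Set.Icc 0 T, (x' t, y' t) ≠ (0, 0)) ∧
      (∀ t ∈ Set.Icc 0 T,
        deriv (deriv x') t = - x' t / (Real.sqrt (x' t ^ 2 + y' t ^ 2)) ^ 3) ∧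
      (∀ t ∈ Set.Icc 0 T,
        deriv (deriv y') t = - y' t / (Real.sqrt (x' t ^ 2 + y' t ^ 2)) ^ 3) ∧
      (x' 0, y' 0) =
        (x 0 + M * y 0 * Real.cos φ + N * Real.cos φ, y 0 * Real.sin φ) ∧
      (x' T, y' T) =
        (x T + M * y T * Real.cos φ + N * Real.cos φ, y T * Real.sin φ) ∧
      (∀ t ∈ Set.Icc 0 T, Real.sqrt (x' t ^ 2 + y' t ^ 2) =
        x' t * Real.cos φ + M * y' t * Real.sin φ + N * Real.sin φ ^ 2) ∧
      (1 / 2) * (deriv x' 0 ^ 2 + deriv y' 0 ^ 2)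
          - 1 / Real.sqrt (x' 0 ^ 2 + y' 0 ^ 2) =
        (1 / 2) * (deriv x 0 ^ 2 + deriv y 0 ^ 2)
          - 1 / Real.sqrt (x 0 ^ 2 + y 0 ^ 2) := by
  obtain ⟨hφ0, hφπ⟩ := hφ
  have hs : 0 < Real.sin φ := Real.sin_pos_of_pos_of_lt_pi hφ0 hφπ
  have hcs := Real.sin_sq_add_cos_sq φ
  set s := Real.sin φ
  set c := Real.cos φ
  have hc : |c| < 1 := by
    rw [← sq_lt_one_iff_abs_lt_one]; nlinarith
  have m0 : (0 : ℝ) ∈ Icc 0 T := ⟨le_rfl, hT.le⟩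
  have mT : T ∈ Icc 0 T := ⟨hT.le, le_rfl⟩
  have hr : ∀ t ∈ Icc 0 T, 0 < M * y t + N := fun t ht => by
    rw [← hbranch t ht, Real.sqrt_pos]
    have := hne t ht
    rw [Ne, Prod.mk.injEq, not_and_or] at this
    rcases this with h | h <;> positivity
  have hb : ∀ t ∈ Icc 0 T, x t ^ 2 + y t ^ 2 = (M * y t + N) ^ 2 := fun t ht => by
    rw [← hbranch t ht, Real.sq_sqrt (by positivity)]
  obtain ⟨C, hCN, hu, hv⟩ := velocity_of_branch hN hT (x := x) (y := y) (u := deriv x)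
    (v := deriv y)
    (fun t ht => (hx t ht).1.hasDerivAt) (fun t ht => (hy t ht).1.hasDerivAt)
    (fun t ht => by rw [← hbranch t ht, ← hnx t ht]; exact (hx t ht).2.hasDerivAt)
    (fun t ht => by rw [← hbranch t ht, ← hny t ht]; exact (hy t ht).2.hasDerivAt) hr hb
  have hC0 : C ≠ 0 := by rintro rfl; simp at hCN; exact hN.ne hCN
  have hx' : ∀ t ∈ Icc 0 T, HasDerivAt x (C / N * (M - y t / (M * y t + N))) t := fun t ht =>
    hu t ht ▸ (hx t ht).1.hasDerivAt
  have hy' : ∀ t ∈ Icc 0 T, HasDerivAt y (C / N * (x t / (M * y t + N))) t := fun t ht =>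
    hv t ht ▸ (hy t ht).1.hasDerivAt
  have hxr : ∀ t ∈ Icc 0 T, |x t| ≤ M * y t + N := fun t ht =>
    abs_le_of_sq_le_sq (by nlinarith [hb t ht, sq_nonneg (y t)]) (hr t ht).le
  have hcx : ∀ t ∈ Icc 0 T, -(|c| * (M * y t + N)) ≤ c * x t := fun t ht => by
    have h1 := neg_abs_le (c * x t)
    rw [abs_mul] at h1
    nlinarith [mul_le_mul_of_nonneg_left (hxr t ht) (abs_nonneg c)]
  have hρ : ∀ t ∈ Icc 0 T, 0 < M * y t + N + c * x t := fun t ht => by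
    nlinarith [hcx t ht, hr t ht]
  have hxc : ContinuousOn x (Icc 0 T) := fun t ht => (hx' t ht).continuousAt.continuousWithinAt
  have hyc : ContinuousOn y (Icc 0 T) := fun t ht => (hy' t ht).continuousAt.continuousWithinAt
  -- the time change `τ`, with derivative `ρ / r ≥ 1 - |c|`, and its inverse `σ`
  obtain ⟨σ, hσ0, hσT, hσm, hσ⟩ := exists_inverse_time (m := 1 - |c|)
    (τ := fun t => t + c * (N / C) * (y t - y 0))
    (g := fun t => (M * y t + N + c * x t) / (M * y t + N)) hT (by linarith)
    (fun t ht => by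
      refine ((hasDerivAt_id t).add
        (((hy' t ht).sub_const (y 0)).const_mul (c * (N / C)))).congr_deriv ?_
      have := (hr t ht).ne'
      field_simp)
    (ContinuousOn.div (by fun_prop) (by fun_prop) fun t ht => (hr t ht).ne')
    (fun t ht => by
      rw [le_div_iff₀ (hr t ht)]
      linarith [hcx t ht])
    (by simp) (by simp [hord])
  have hσc : ContinuousOn σ (Icc 0 T) := fun t ht => (hσ t ht).continuousAt.continuousWithinAt
  have hxσ : ∀ t ∈ Icc 0 T, HasDerivAt (fun t => x (σ t))
      (C / N * (M * (M * y (σ t) + N) - y (σ t)) / (M * y (σ t) + N + c * x (σ t))) t :=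
    fun t ht => by
      have h1 := (hr _ (hσm t ht)).ne'
      have h2 := (hρ _ (hσm t ht)).ne'
      refine ((hx' _ (hσm t ht)).comp t (hσ t ht)).congr_deriv ?_
      field_simp
  have hyσ : ∀ t ∈ Icc 0 T, HasDerivAt (fun t => y (σ t))
      (C / N * x (σ t) / (M * y (σ t) + N + c * x (σ t))) t :=
    fun t ht => by
      have h1 := (hr _ (hσm t ht)).ne'
      have h2 := (hρ _ (hσm t ht)).ne'
      refine ((hy' _ (hσm t ht)).comp t (hσ t ht)).congr_deriv ?_
      field_simp
  have hxσc : ContinuousOn (fun t => x (σ t)) (Icc 0 T) := hxc.comp hσc hσm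
  have hyσc : ContinuousOn (fun t => y (σ t)) (Icc 0 T) := hyc.comp hσc hσm
  have hbσ := fun t ht => hb _ (hσm t ht)
  have hρσ := fun t ht => hρ _ (hσm t ht)
  clear_value s c
  -- from here on `X`, `Y` are the coordinates of the given arc in the new time
  generalize hX : (fun t => x (σ t)) = X at *
  generalize hY : (fun t => y (σ t)) = Y at *
  have eX : ∀ t, x (σ t) = X t := fun t => congrFun hX t
  have eY : ∀ t, y (σ t) = Y t := fun t => congrFun hY t
  simp only [eX, eY] at hxσ hyσ hbσ hρσ
  have hρd : ∀ t ∈ Icc 0 T, HasDerivAt (fun t => M * Y t + N + c * X t) _ t := fun t ht =>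
    (((hyσ t ht).const_mul M).add_const N).add ((hxσ t ht).const_mul c)
  -- the image curve has hodograph `(C / N) (M - Y / ρ, s X / ρ)`; differentiating once more, and
  -- using `C ^ 2 = N`, gives Newton's equation
  obtain ⟨P, hP, hP1, hPd, hP2⟩ := exists_extension_two hT
    (f := fun t => X t + c * (M * Y t + N))
    (v := fun t => C / N * (M - Y t / (M * Y t + N + c * X t)))
    (a := fun t => -(X t + c * (M * Y t + N)) / (M * Y t + N + c * X t) ^ 3)
    (fun t ht => by
      have h2 := (hρσ t ht).ne'
      refine ((hxσ t ht).add ((((hyσ t ht).const_mul M).add_const N).const_mul c)).congr_deriv ?_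
      field_simp
      ring)
    (fun t ht => by
      have h2 := (hρσ t ht).ne'
      refine ((((hyσ t ht).div (hρd t ht) h2).const_sub M).const_mul (C / N)).congr_deriv ?_
      rw [← hCN]
      have hbt := hbσ t ht
      rw [← hCN] at h2 hbt
      field_simp
      linear_combination (-c / (M * Y t + C ^ 2 + c * X t) ^ 3) * hbt)
    (ContinuousOn.div (by fun_prop) (by fun_prop) fun t ht => pow_ne_zero 3 (hρσ t ht).ne')
  obtain ⟨Q, hQ, hQ1, hQd, hQ2⟩ := exists_extension_two hT
    (f := fun t => s * Y t)
    (v := fun t => C / N * s * (X t / (M * Y t + N + c * X t)))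
    (a := fun t => -(s * Y t) / (M * Y t + N + c * X t) ^ 3)
    (fun t ht => by
      have h2 := (hρσ t ht).ne'
      refine ((hyσ t ht).const_mul s).congr_deriv ?_
      field_simp)
    (fun t ht => by
      have h2 := (hρσ t ht).ne'
      refine (((hxσ t ht).div (hρd t ht) h2).const_mul (C / N * s)).congr_deriv ?_
      rw [← hCN]
      have hbt := hbσ t ht
      rw [← hCN] at h2 hbt
      field_simp
      linear_combination -M * hbt)
    (ContinuousOn.div (by fun_prop) (by fun_prop) fun t ht => pow_ne_zero 3 (hρσ t ht).ne')
  have hsq : ∀ t ∈ Icc 0 T, P t ^ 2 + Q t ^ 2 = (M * Y t + N + c * X t) ^ 2 := fun t ht => by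
    rw [hP t ht, hQ t ht]
    linear_combination (1 - c ^ 2) * hbσ t ht + Y t ^ 2 * hcs
  have hsqrt : ∀ t ∈ Icc 0 T, Real.sqrt (P t ^ 2 + Q t ^ 2) = M * Y t + N + c * X t :=
    fun t ht => by rw [hsq t ht, Real.sqrt_sq (hρσ t ht).le]
  refine ⟨P, Q, hPd, hQd, fun t ht h => ?_, fun t ht => ?_, fun t ht => ?_, ?_, ?_,
    fun t ht => ?_, ?_⟩
  · rw [Prod.mk.injEq] at h
    have := hsq t ht
    rw [h.1, h.2] at this
    have := hρσ t ht
    nlinarith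
  · rw [hP2 t ht, hsqrt t ht, hP t ht]
  · rw [hQ2 t ht, hsqrt t ht, hQ t ht]
  · rw [hP 0 m0, hQ 0 m0, ← eX, ← eY, hσ0, Prod.mk.injEq]
    constructor <;> ring
  · rw [hP T mT, hQ T mT, ← eX, ← eY, hσT, Prod.mk.injEq]
    constructor <;> ring
  · rw [hsqrt t ht, hP t ht, hQ t ht]
    linear_combination - (M * Y t + N) * hcs
  · -- both sides equal `(M ^ 2 - 1) / (2 * N)`
    trans (M ^ 2 - 1) / (2 * N)
    · rw [hsqrt 0 m0, hP1 0 m0, hQ1 0 m0]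
      have h2 := (hρσ 0 m0).ne'
      have hbt := hbσ 0 m0
      rw [← hCN] at h2 hbt ⊢
      field_simp
      linear_combination hbt + X 0 ^ 2 * hcs
    · rw [hbranch 0 m0, hu 0 m0, hv 0 m0]
      have h2 := (hr 0 m0).ne'
      have hbt := hb 0 m0
      rw [← hCN] at h2 hbt ⊢
      field_simp
      linear_combination -hbt
end
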